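/- arXiv:1309.1147 — 3 statements merged into one kernel-verified Lean document; each statement's English description precedes it below -/
import Mathlib

section
/- For every integer d ≥ 2 there is a constant c > 0 such that for all sufficiently large n, OT_d(n) ≥ twr_d(⌈c·n⌉); equivalently, there exists a sequence of twr_d(⌈c·n⌉) − 1 points in general position in R^d containing no order-type homogeneous subsequence of length n. -/
open Set

/-- `h` is an (affine) hyperplane in `ℝ^d`: the solution set of a nontrivial
linear equation `∑ i, u i * x i = c`. -/
def IsHyperplane {d : ℕ} (h : Set (Fin d → ℝ)) : Prop :=
  ∃ (u : Fin d → ℝ) (c : ℝ), u ≠ 0 ∧ h = {x | ∑ i, u i * x i = c}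

/-- A curve `γ` is `k`-crossing on the interval `I` if for every hyperplane `h`
the set `{t ∈ I : γ t ∈ h}` has at most `k` elements. -/
def CurveCrossing {d : ℕ} (k : ℕ) (I : Set ℝ) (γ : ℝ → (Fin d → ℝ)) : Prop :=
  ∀ h : Set (Fin d → ℝ), IsHyperplane h → {t | t ∈ I ∧ γ t ∈ h}.encard ≤ (k : ℕ∞)

/-- The polygonal path `p 0 p 1 ⋯ p (n-1)`, as a subset of `ℝ^d`
(the union of its edges). -/
def PathSet {d n : ℕ} (p : Fin n → (Fin d → ℝ)) : Set (Fin d → ℝ) :=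
  ⋃ (i : Fin n) (h : (i : ℕ) + 1 < n), segment ℝ (p i) (p ⟨(i : ℕ) + 1, h⟩)

/-- A polygonal path is `k`-crossing if every hyperplane containing no edge of the
path intersects the path in at most `k` points. -/
def PathCrossing {d n : ℕ} (k : ℕ) (p : Fin n → (Fin d → ℝ)) : Prop :=
  ∀ h : Set (Fin d → ℝ), IsHyperplane h →
    (∀ (i : Fin n) (hi : (i : ℕ) + 1 < n), ¬ segment ℝ (p i) (p ⟨(i : ℕ) + 1, hi⟩) ⊆ h) →
    (PathSet p ∩ h).encard ≤ (k : ℕ∞)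

/-- A point sequence in `ℝ^d` is in general position if every at most `d+1` of the
points are affinely independent. -/
def GeneralPosition {d n : ℕ} (p : Fin n → (Fin d → ℝ)) : Prop :=
  ∀ s : Finset (Fin n), s.card ≤ d + 1 → AffineIndependent ℝ (fun i : s => p i)

/-- The sign (orientation) of an ordered `(d+1)`-tuple of points of `ℝ^d`: the sign of
the determinant of the `(d+1) × (d+1)` matrix whose `j`-th column is `(1, q j)`. -/
noncomputable def otSign {d : ℕ} (q : Fin (d + 1) → (Fin d → ℝ)) : ℝ :=
  Real.sign (Matrix.det (Matrix.of fun i j : Fin (d + 1) =>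
    (Fin.cons (1 : ℝ) (q j) : Fin (d + 1) → ℝ) i))

/-- A point sequence is order-type homogeneous if all of its increasing-index
`(d+1)`-tuples have the same nonzero sign. -/
def OrderTypeHomogeneous {d n : ℕ} (p : Fin n → (Fin d → ℝ)) : Prop :=
  ∃ σ : ℝ, σ ≠ 0 ∧ ∀ f : Fin (d + 1) → Fin n, StrictMono f →
    otSign (fun j => p (f j)) = σ

/-- The sign of a `(d+1)`-element subset of the index set of a point sequence:
the sign of the corresponding increasing-index `(d+1)`-tuple (junk value `0` if the
set does not have `d+1` elements). -/
noncomputable def finsetSign {d n : ℕ} (p : Fin n → (Fin d → ℝ)) (s : Finset (Fin n)) : ℝ :=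
  if h : s.card = d + 1 then otSign (fun j => p ((s.orderIsoOfFin h) j : Fin n)) else 0

/-- A point sequence in `ℝ^d` is in super-general position if for each `1 ≤ k ≤ d` its
projection to the first `k` coordinates is in general position. -/
def SuperGeneralPosition {d n : ℕ} (p : Fin n → (Fin d → ℝ)) : Prop :=
  ∀ (k : ℕ), 1 ≤ k → ∀ (hk : k ≤ d),
    GeneralPosition (fun i => fun j : Fin k => p i (Fin.castLE hk j))

/-- A point sequence in `ℝ^d` is super-order-type homogeneous if for each `1 ≤ k ≤ d` its
projection to the first `k` coordinates is order-type homogeneous. -/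
def SuperOrderTypeHomogeneous {d n : ℕ} (p : Fin n → (Fin d → ℝ)) : Prop :=
  ∀ (k : ℕ), 1 ≤ k → ∀ (hk : k ≤ d),
    OrderTypeHomogeneous (fun i => fun j : Fin k => p i (Fin.castLE hk j))

/-- `OTNum d n` is the smallest `N` such that every sequence of `N` points in general
position in `ℝ^d` contains an order-type homogeneous subsequence of length `n`. -/
noncomputable def OTNum (d n : ℕ) : ℕ :=
  sInf {N : ℕ | ∀ p : Fin N → (Fin d → ℝ), GeneralPosition p →
    ∃ f : Fin n → Fin N, StrictMono f ∧ OrderTypeHomogeneous (fun i => p (f i))}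

/-- `COTNum d n` is the smallest `N` such that every sequence of `N` points in
super-general position in `ℝ^d` contains a super-order-type homogeneous subsequence
of length `n`. -/
noncomputable def COTNum (d n : ℕ) : ℕ :=
  sInf {N : ℕ | ∀ p : Fin N → (Fin d → ℝ), SuperGeneralPosition p →
    ∃ f : Fin n → Fin N, StrictMono f ∧ SuperOrderTypeHomogeneous (fun i => p (f i))}

/-- The tower function: `twr 1 x = x` and `twr (i+1) x = 2 ^ twr i x`. -/
def twr (k x : ℕ) : ℕ := (fun y => 2 ^ y)^[k - 1] x

/-- `t` is an `ε`-sample of the interval `[a, b]`: an increasing tuple of points of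
`[a, b]` meeting every subinterval of `[a, b]` of length `ε`. -/
def IsEpsSample (a b ε : ℝ) {n : ℕ} (t : Fin n → ℝ) : Prop :=
  StrictMono t ∧ (∀ i, t i ∈ Set.Icc a b) ∧
    ∀ x : ℝ, Set.Icc x (x + ε) ⊆ Set.Icc a b → ∃ i, t i ∈ Set.Icc x (x + ε)

/-- All `(k+1)`-element subsets of the index interval `[a, b]` have the same sign. -/
def IntervalHomog {n : ℕ} (k : ℕ) (sgn : Finset (Fin n) → Bool) (a b : Fin n) : Prop :=
  ∃ σ : Bool, ∀ s : Finset (Fin n), s.card = k + 1 → (∀ i ∈ s, a ≤ i ∧ i ≤ b) → sgn s = σ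

/-- `c 0 = 0 < c 1 < ⋯ < c m = n - 1` are the cut points of the greedy partition of the
`k`-sequence on `Fin n` with sign function `sgn` into the `m` blocks
`[c 0, c 1], [c 1, c 2], …, [c (m-1), c m]` (consecutive blocks overlap in one point):
each block has all its `(k+1)`-element subsets of the same sign, and each block is
maximal with this property (cannot be extended to the right). -/
def IsGreedyPartition {n : ℕ} (k : ℕ) (sgn : Finset (Fin n) → Bool) (m : ℕ)
    (c : Fin (m + 1) → Fin n) : Prop :=
  (c 0 : ℕ) = 0 ∧ (c (Fin.last m) : ℕ) = n - 1 ∧ StrictMono c ∧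
    (∀ j : Fin m, IntervalHomog k sgn (c j.castSucc) (c j.succ)) ∧
    (∀ j : Fin m, ∀ e : Fin n, c j.succ < e → ¬ IntervalHomog k sgn (c j.castSucc) e)

/-- A `k`-sequence is a flip `k`-sequence if for every `k`-element subset `A` of indices
the sign sequence `(sgn (insert i A) : i ∉ A)` (indices in increasing order) has at most
one sign change; for `±`-valued sequences this says there are no positions `i < j < l`
with `sgn (insert i A) ≠ sgn (insert j A)` and `sgn (insert j A) ≠ sgn (insert l A)`. -/
def FlipSeq {n : ℕ} (k : ℕ) (sgn : Finset (Fin n) → Bool) : Prop :=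
  ∀ A : Finset (Fin n), A.card = k →
    ¬ ∃ i j l : Fin n, i < j ∧ j < l ∧ i ∉ A ∧ j ∉ A ∧ l ∉ A ∧
      sgn (insert i A) ≠ sgn (insert j A) ∧ sgn (insert j A) ≠ sgn (insert l A)

/-!
Write points of `ℝ^d` as vectors with leading coordinate `1`, so that orientations are signs of
determinants. Points `V l`, `l < N`, are stepped up to `2 ^ N` points one dimension higher, namely
`∑ l ∈ A, t ^ l • V l` for `A ⊆ {0, …, N - 1}`. Consecutive differences of a chain of sets in the
colexicographic order are dominated, as `t → ∞`, by the largest elements in which the sets differ,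
so the orientation of a chain of sets is that of these top differences. If triples of sets on a
chain have equal orientation in the plane, then its top differences are monotone, and homogeneity
of the chain passes down to them; a small perturbation restores general position. Hence,
starting from `x` points on a line, there are `twr d x` points in `ℝ^d` no `x + d` of which have
homogeneous projections to their first `k` coordinates for all `k ≤ d`.

It remains to see that a sequence of `n` points that is homogeneous in `ℝ^d` has a subsequence of
length proportional to `n` all of whose projections are. By the three-term Plücker relation, the
signs of the minors of one size less form a flip sequence. By Ramsey's theorem these signs agree on
all subsets of a bounded number of sample points, and the flip property then forces them to be
constant on the interval between two adjacent samples in the middle.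
-/

section Ramsey

universe u

/-- Erdős–Rado arrow notation `R → (a, b)^r`: for every two-colouring (encoded as a predicate) of
the `r`-subsets of a set of at least `R` points, there are `a` points all of whose `r`-subsets have
the first colour or `b` points all of whose `r`-subsets have the second one. -/
def RamseyArrow (R a b r : ℕ) : Prop :=
  ∀ {α : Type u} (χ : Finset α → Prop) (X : Finset α), R ≤ X.card →
    (∃ H ⊆ X, H.card = a ∧ ∀ T ∈ Finset.powersetCard r H, χ T) ∨
      ∃ H ⊆ X, H.card = b ∧ ∀ T ∈ Finset.powersetCard r H, ¬χ T

theorem forall_powersetCard_succ_insert {α : Type*} [DecidableEq α] {x : α} {H : Finset α}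
    (hx : x ∉ H) (r : ℕ) (P : Finset α → Prop) :
    (∀ T ∈ Finset.powersetCard (r + 1) (insert x H), P T) ↔
      (∀ T ∈ Finset.powersetCard (r + 1) H, P T) ∧
        ∀ T ∈ Finset.powersetCard r H, P (insert x T) := by
  simp only [Finset.powersetCard_succ_insert hx, Finset.mem_union, or_imp, forall_and,
    Finset.forall_mem_image]

namespace RamseyArrow

variable {R R₁ R₂ a b r : ℕ}

theorem symm (h : RamseyArrow.{u} R a b r) : RamseyArrow.{u} R b a r := by
  intro α χ X hX
  simpa only [not_not] using (h (fun T => ¬χ T) X hX).symm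

theorem zero_left (b r : ℕ) : RamseyArrow.{u} 0 0 b (r + 1) := by
  intro α χ X _
  refine .inl ⟨∅, Finset.empty_subset X, rfl, fun T hT => ?_⟩
  rw [Finset.powersetCard_eq_empty.2 (by simp)] at hT
  exact absurd hT (Finset.notMem_empty T)

theorem zero (a b : ℕ) : RamseyArrow.{u} (max a b) a b 0 := by
  intro α χ X hX
  obtain ⟨A, hAX, hA⟩ := Finset.exists_subset_card_eq ((le_max_left a b).trans hX)
  obtain ⟨B, hBX, hB⟩ := Finset.exists_subset_card_eq ((le_max_right a b).trans hX)
  by_cases h : χ ∅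
  · exact .inl ⟨A, hAX, hA, by simpa using h⟩
  · exact .inr ⟨B, hBX, hB, by simpa using h⟩

theorem succ (h₁ : RamseyArrow.{u} R₁ a (b + 1) (r + 1)) (h₂ : RamseyArrow.{u} R₂ (a + 1) b (r + 1))
    (h : RamseyArrow.{u} R R₁ R₂ r) : RamseyArrow.{u} (R + 1) (a + 1) (b + 1) (r + 1) := by
  classical
  intro α χ X hX
  obtain ⟨x, hx⟩ : X.Nonempty := Finset.card_pos.1 (by lia)
  have hX' : R ≤ (X.erase x).card := by rw [Finset.card_erase_of_mem hx]; lia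
  have insert_mem {Y H : Finset α} (hY : Y ⊆ X.erase x) (hH : H ⊆ Y) : x ∉ H ∧ insert x H ⊆ X :=
    ⟨fun h => Finset.notMem_erase x X (hY (hH h)),
      Finset.insert_subset hx ((hH.trans hY).trans (Finset.erase_subset x X))⟩
  obtain ⟨Y, hY, hcard, hχ⟩ | ⟨Y, hY, hcard, hχ⟩ := h (fun T => χ (insert x T)) _ hX'
  · obtain ⟨H, hH, hHa, hHχ⟩ | ⟨H, hH, hHb⟩ := h₁ χ Y hcard.ge
    · obtain ⟨hxH, hsub⟩ := insert_mem hY hH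
      exact .inl ⟨insert x H, hsub, by rw [Finset.card_insert_of_notMem hxH, hHa],
        (forall_powersetCard_succ_insert hxH r χ).2
          ⟨hHχ, fun T hT => hχ T (Finset.powersetCard_mono hH hT)⟩⟩
    · exact .inr ⟨H, (hH.trans hY).trans (Finset.erase_subset x X), hHb⟩
  · obtain ⟨H, hH, hHa⟩ | ⟨H, hH, hHb, hHχ⟩ := h₂ χ Y hcard.ge
    · exact .inl ⟨H, (hH.trans hY).trans (Finset.erase_subset x X), hHa⟩
    · obtain ⟨hxH, hsub⟩ := insert_mem hY hH
      exact .inr ⟨insert x H, hsub, by rw [Finset.card_insert_of_notMem hxH, hHb],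
        (forall_powersetCard_succ_insert hxH r fun T => ¬χ T).2
          ⟨hHχ, fun T hT => hχ T (Finset.powersetCard_mono hH hT)⟩⟩

end RamseyArrow

theorem exists_ramseyArrow (a b r : ℕ) : ∃ R, RamseyArrow.{u} R a b r := by
  induction r generalizing a b with
  | zero => exact ⟨_, RamseyArrow.zero a b⟩
  | succ r ihr =>
    induction a generalizing b with
    | zero => exact ⟨_, RamseyArrow.zero_left b r⟩
    | succ a iha =>
      induction b with
      | zero => exact ⟨_, RamseyArrow.symm (RamseyArrow.zero_left (a + 1) r)⟩
      | succ b ihb =>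
        obtain ⟨R₁, h₁⟩ := iha (b + 1)
        obtain ⟨R₂, h₂⟩ := ihb
        obtain ⟨R, h⟩ := ihr R₁ R₂
        exact ⟨R + 1, h₁.succ h₂ h⟩

end Ramsey

section OrderEmbOfFin

variable {α : Type*} [LinearOrder α]

theorem card_filter_lt_orderEmbOfFin (s : Finset α) {m : ℕ} (h : s.card = m) (i : Fin m) :
    (s.filter (· < s.orderEmbOfFin h i)).card = i := by
  have hs := s.map_orderEmbOfFin_univ h
  generalize s.orderEmbOfFin h = e at hs ⊢
  rw [← hs, Finset.filter_map, Finset.card_map]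
  simp [Finset.filter_gt_eq_Iio]

theorem card_filter_gt_orderEmbOfFin (s : Finset α) {m : ℕ} (h : s.card = m) (i : Fin m) :
    (s.filter (s.orderEmbOfFin h i < ·)).card = m - 1 - i := by
  have hs := s.map_orderEmbOfFin_univ h
  generalize s.orderEmbOfFin h = e at hs ⊢
  rw [← hs, Finset.filter_map, Finset.card_map]
  simp [Finset.filter_lt_eq_Ioi]

end OrderEmbOfFin

section FlipSequences

theorem FlipSeq.eq_of_eqOn_of_sdiff_subset_Icc {n k : ℕ} {sgn : Finset (Fin n) → Bool}
    (hflip : FlipSeq k sgn) {H : Finset (Fin n)} {σ : Bool} {a b : Fin n}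
    (hH : ∀ T ∈ Finset.powersetCard (k + 1) H, sgn T = σ)
    (ha : k < (H.filter (· < a)).card) (hb : k < (H.filter (b < ·)).card)
    (T : Finset (Fin n)) (hT : T.card = k + 1) (hTab : T \ H ⊆ Finset.Icc a b) : sgn T = σ := by
  induction hd : (T \ H).card generalizing T with
  | zero =>
    rw [Finset.card_eq_zero, Finset.sdiff_eq_empty_iff_subset] at hd
    exact hH T (Finset.mem_powersetCard.2 ⟨hd, hT⟩)
  | succ d ih =>
    obtain ⟨x, hx⟩ : (T \ H).Nonempty := Finset.card_pos.1 (by lia)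
    obtain ⟨hxT, -⟩ := Finset.mem_sdiff.1 hx
    obtain ⟨hax, hxb⟩ := Finset.mem_Icc.1 (hTab hx)
    have hA : (T.erase x).card = k := by rw [Finset.card_erase_of_mem hxT]; lia
    have sgn_exchange {y : Fin n} (hyH : y ∈ H) (hyA : y ∉ T.erase x) :
        sgn (insert y (T.erase x)) = σ := by
      have hsdiff : insert y (T.erase x) \ H = (T \ H).erase x := by
        rw [Finset.insert_sdiff_of_mem _ hyH, Finset.erase_sdiff_comm]
      refine ih _ (by rw [Finset.card_insert_of_notMem hyA, hA]) ?_ ?_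
      · exact hsdiff ▸ (Finset.erase_subset x _).trans hTab
      · rw [hsdiff, Finset.card_erase_of_mem hx, hd, Nat.add_sub_cancel]
    obtain ⟨i, hi, hiA⟩ := Finset.exists_mem_notMem_of_card_lt_card (hA ▸ ha)
    obtain ⟨l, hl, hlA⟩ := Finset.exists_mem_notMem_of_card_lt_card (hA ▸ hb)
    rw [Finset.mem_filter] at hi hl
    by_contra hne
    refine hflip _ hA ⟨i, x, l, hi.2.trans_le hax, hxb.trans_lt hl.2, hiA,
      Finset.notMem_erase x T, hlA, ?_⟩
    rw [sgn_exchange hi.1 hiA, sgn_exchange hl.1 hlA, Finset.insert_erase hxT]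
    exact ⟨Ne.symm hne, hne⟩

theorem FlipSeq.intervalHomog {n k : ℕ} {sgn : Finset (Fin n) → Bool} (hflip : FlipSeq k sgn)
    {H : Finset (Fin n)} {σ : Bool} {a b : Fin n}
    (hH : ∀ T ∈ Finset.powersetCard (k + 1) H, sgn T = σ)
    (ha : k < (H.filter (· < a)).card) (hb : k < (H.filter (b < ·)).card) :
    IntervalHomog k sgn a b :=
  ⟨σ, fun T hT hTab => hflip.eq_of_eqOn_of_sdiff_subset_Icc hH ha hb T hT fun i hi =>
    Finset.mem_Icc.2 (hTab i (Finset.sdiff_subset hi))⟩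

theorem exists_monochromatic_powersetCard (m r : ℕ) :
    ∃ R : ℕ, ∀ {α : Type*} (X : Finset α) (sgn : Finset α → Bool), R ≤ X.card →
      ∃ H ⊆ X, H.card = m ∧ ∃ σ, ∀ T ∈ Finset.powersetCard r H, sgn T = σ := by
  obtain ⟨R, hR⟩ := exists_ramseyArrow m m r
  refine ⟨R, fun X sgn hX => ?_⟩
  obtain ⟨H, hHX, hHm, hH⟩ | ⟨H, hHX, hHm, hH⟩ := hR (fun T => sgn T = true) X hX
  · exact ⟨H, hHX, hHm, true, hH⟩
  · exact ⟨H, hHX, hHm, false, by simpa only [Bool.not_eq_true] using hH⟩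

theorem exists_intervalHomog_of_flipSeq (k : ℕ) :
    ∃ C : ℕ, ∀ (n q : ℕ) (sgn : Finset (Fin n) → Bool), FlipSeq k sgn → 0 < q →
      C * q ≤ n → ∃ a b : Fin n, (a : ℕ) + q ≤ b ∧ IntervalHomog k sgn a b := by
  obtain ⟨R, hR⟩ := exists_monochromatic_powersetCard (2 * k + 4) (k + 1)
  refine ⟨R, fun n q sgn hflip hq hn => ?_⟩
  have multiple_lt (i : Fin R) : (i : ℕ) * q < n :=
    (Nat.mul_lt_mul_of_pos_right i.isLt hq).trans_le hn
  let multiple (i : Fin R) : Fin n := ⟨i * q, multiple_lt i⟩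
  have multiple_injective : Function.Injective multiple := fun i j hij =>
    Fin.ext (Nat.eq_of_mul_eq_mul_right hq (Fin.val_eq_of_eq hij))
  obtain ⟨H, hHX, hHcard, σ, hσ⟩ := hR (Finset.univ.image multiple) sgn
    (by rw [Finset.card_image_of_injective _ multiple_injective, Finset.card_fin])
  let e := H.orderEmbOfFin hHcard
  let a : Fin (2 * k + 4) := ⟨k + 1, by lia⟩
  let b : Fin (2 * k + 4) := ⟨k + 2, by lia⟩
  refine ⟨e a, e b, ?_, hflip.intervalHomog hσ ?_ ?_⟩
  · have hab : (e a : ℕ) < e b := e.strictMono (Nat.lt_succ_self (k + 1))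
    obtain ⟨i, -, hi⟩ := Finset.mem_image.1 (hHX (H.orderEmbOfFin_mem hHcard a))
    obtain ⟨j, -, hj⟩ := Finset.mem_image.1 (hHX (H.orderEmbOfFin_mem hHcard b))
    have hia : (i : ℕ) * q = e a := congrArg Fin.val hi
    have hjb : (j : ℕ) * q = e b := congrArg Fin.val hj
    rw [← hia, ← hjb] at hab ⊢
    calc (i : ℕ) * q + q = (i + 1) * q := by ring
      _ ≤ j * q := Nat.mul_le_mul_right q (Nat.lt_of_mul_lt_mul_right hab)
  · rw [card_filter_lt_orderEmbOfFin]
    exact Nat.lt_succ_self k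
  · rw [card_filter_gt_orderEmbOfFin]
    change k < 2 * k + 4 - 1 - (k + 2)
    lia

end FlipSequences

section TopMinor

variable {ι κ R : Type*} [CommRing R]

/-- The `k × k` minor on the first `k` coordinates of the vectors `V (f 0), …, V (f (k - 1))`, which
are the columns. For `V a = (1, x a)` with points `x a`, this is the orientation determinant of the
projections of `k` of these points to the first `k - 1` coordinates. -/
def topMinor (V : ι → ℕ → R) {k : ℕ} (f : Fin k → ι) : R :=
  (Matrix.of fun i j : Fin k => V (f j) i).det

theorem topMinor_comp (V : ι → ℕ → R) (g : κ → ι) {k : ℕ} (f : Fin k → κ) :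
    topMinor (V ∘ g) f = topMinor V (g ∘ f) :=
  rfl

theorem topMinor_zero (V : ι → ℕ → R) (f : Fin 0 → ι) : topMinor V f = 1 :=
  Matrix.det_isEmpty

theorem topMinor_two {V : ι → ℕ → R} (hV : ∀ a, V a 0 = 1) (f : Fin 2 → ι) :
    topMinor V f = V (f 1) 1 - V (f 0) 1 := by
  simp [topMinor, Matrix.det_fin_two, hV]

theorem map_topMinor {S : Type*} [CommRing S] (φ : R →+* S) (V : ι → ℕ → R) {k : ℕ}
    (f : Fin k → ι) : φ (topMinor V f) = topMinor (fun a i => φ (V a i)) f := by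
  rw [topMinor, RingHom.map_det]
  rfl

theorem topMinor_comp_perm (V : ι → ℕ → R) {k : ℕ} (f : Fin k → ι) (σ : Equiv.Perm (Fin k)) :
    topMinor V (f ∘ σ) = Equiv.Perm.sign σ * topMinor V f :=
  Matrix.det_permute' σ (Matrix.of fun i j : Fin k => V (f j) i)

theorem topMinor_eq_zero_of_not_injective (V : ι → ℕ → R) {k : ℕ} {f : Fin k → ι}
    (hf : ¬Function.Injective f) : topMinor V f = 0 := by
  obtain ⟨i, j, hij, hne⟩ := Function.not_injective_iff.1 hf
  exact Matrix.det_zero_of_column_eq hne fun r => by simp only [Matrix.of_apply, hij]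

theorem topMinor_succ_eq_det_sub {V : ι → ℕ → R} (hV : ∀ a, V a 0 = 1) {k : ℕ}
    (f : Fin (k + 1) → ι) :
    topMinor V f =
      (Matrix.of fun i j : Fin k => V (f j.succ) (i + 1) - V (f j.castSucc) (i + 1)).det := by
  let D : Matrix (Fin (k + 1)) (Fin (k + 1)) R := Matrix.of fun i j =>
    Fin.cases (V (f 0) i) (fun j' : Fin k => V (f j'.succ) i - V (f j'.castSucc) i) j
  have hD : topMinor V f = D.det := by
    refine Matrix.det_eq_of_forall_col_eq_smul_add_pred (fun _ => 1) (fun _ => rfl) fun i j => ?_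
    simp [D]
  have hD_zero : D 0 0 = 1 := hV (f 0)
  have hD_succ (j : Fin k) : D 0 j.succ = 0 := by simp [D, hV]
  rw [hD, Matrix.det_succ_row_zero, Fin.sum_univ_succ]
  simp only [hD_zero, hD_succ, Fin.val_zero, pow_zero, one_mul, mul_zero, zero_mul,
    Finset.sum_const_zero, add_zero, Fin.succAbove_zero]
  rfl

theorem sum_topMinor_succAbove (V : ι → ℕ → R) {n : ℕ} (f : Fin (n + 1) → ι) (r : Fin n) :
    ∑ t : Fin (n + 1), (-1) ^ (t : ℕ) * V (f t) r * topMinor V (f ∘ t.succAbove) = 0 := by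
  let M : Matrix (Fin (n + 1)) (Fin (n + 1)) R :=
    Matrix.of (Fin.cons (fun t => V (f t) r) fun i t => V (f t) i)
  have hM : M.det = 0 := Matrix.det_zero_of_row_eq (Fin.succ_ne_zero r).symm rfl
  rwa [Matrix.det_succ_row_zero] at hM

theorem exists_topMinor_cons_eq_sum (V : ι → ℕ → R) {k : ℕ} (f : Fin k → ι) :
    ∃ c : Fin (k + 1) → R, ∀ x, topMinor V (Fin.cons x f : Fin (k + 1) → ι) =
      ∑ r, c r * V x r := by
  refine ⟨fun r => (-1) ^ (r : ℕ) *
    (Matrix.of fun i j : Fin k => V (f j) (r.succAbove i)).det, fun x => ?_⟩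
  rw [topMinor, Matrix.det_succ_column_zero]
  refine Finset.sum_congr rfl fun r _ => ?_
  rw [mul_right_comm]
  rfl

theorem sum_topMinor_cons_mul_topMinor_succAbove (V : ι → ℕ → R) {k n : ℕ} (hkn : k < n)
    (f : Fin k → ι) (g : Fin (n + 1) → ι) :
    ∑ t : Fin (n + 1), (-1) ^ (t : ℕ) * topMinor V (Fin.cons (g t) f : Fin (k + 1) → ι) *
      topMinor V (g ∘ t.succAbove) = 0 := by
  obtain ⟨c, hc⟩ := exists_topMinor_cons_eq_sum V f
  calc _ = ∑ r, c r * ∑ t : Fin (n + 1),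
            (-1) ^ (t : ℕ) * V (g t) r * topMinor V (g ∘ t.succAbove) := by
        simp only [hc, Finset.mul_sum, Finset.sum_mul]
        rw [Finset.sum_comm]
        exact Finset.sum_congr rfl fun r _ => Finset.sum_congr rfl fun t _ => by ring
    _ = 0 := Finset.sum_eq_zero fun r _ =>
        mul_eq_zero_of_right _ (sum_topMinor_succAbove V g (Fin.castLE hkn r))

theorem topMinor_three_term_plucker (V : ι → ℕ → R) {k : ℕ} (f : Fin k → ι) (x y z : ι) :
    topMinor V (Fin.cons x f : Fin (k + 1) → ι) *
          topMinor V (Fin.cons y (Fin.cons z f : Fin (k + 1) → ι) : Fin (k + 2) → ι) -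
        topMinor V (Fin.cons y f : Fin (k + 1) → ι) *
          topMinor V (Fin.cons x (Fin.cons z f : Fin (k + 1) → ι) : Fin (k + 2) → ι) +
      topMinor V (Fin.cons z f : Fin (k + 1) → ι) *
        topMinor V (Fin.cons x (Fin.cons y f : Fin (k + 1) → ι) : Fin (k + 2) → ι) = 0 := by
  let g : Fin (k + 3) → ι :=
    Fin.cons x (Fin.cons y (Fin.cons z f : Fin (k + 1) → ι) : Fin (k + 2) → ι)
  have hsum := sum_topMinor_cons_mul_topMinor_succAbove V (by lia : k < k + 2) f g
  have hvanish (t : Fin k) :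
      topMinor V (Fin.cons (g t.succ.succ.succ) f : Fin (k + 1) → ι) = 0 :=
    topMinor_eq_zero_of_not_injective V fun hinj => Fin.succ_ne_zero t (@hinj t.succ 0 rfl)
  have hg_zero : g ∘ Fin.succAbove 0 = Fin.cons y (Fin.cons z f : Fin (k + 1) → ι) := rfl
  have hg_one : g ∘ Fin.succAbove (Fin.succ 0) = Fin.cons x (Fin.cons z f : Fin (k + 1) → ι) :=
    Fin.cons_comp_succ_succAbove x _ 0
  have hg_two : g ∘ Fin.succAbove (Fin.succ (Fin.succ 0)) =
      Fin.cons x (Fin.cons y f : Fin (k + 1) → ι) :=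
    (Fin.cons_comp_succ_succAbove x _ (Fin.succ 0)).trans
      (congrArg (Fin.cons (α := fun _ => ι) x) (Fin.cons_comp_succ_succAbove y _ 0))
  simp only [Fin.sum_univ_succ, hvanish, hg_zero, hg_one, hg_two, mul_zero, zero_mul,
    Finset.sum_const_zero, add_zero, Fin.val_zero, Fin.val_succ] at hsum
  change (-1) ^ 0 * topMinor V (Fin.cons x f : Fin (k + 1) → ι) * _ +
    ((-1) ^ 1 * topMinor V (Fin.cons y f : Fin (k + 1) → ι) * _ +
      (-1) ^ 2 * topMinor V (Fin.cons z f : Fin (k + 1) → ι) * _) = 0 at hsum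
  linear_combination hsum

end TopMinor

section OrientedMinor

variable {ι R : Type*} [CommRing R]

theorem topMinor_cons_comp_perm (V : ι → ℕ → R) {k : ℕ} (x : ι) (f : Fin k → ι)
    (σ : Equiv.Perm (Fin k)) :
    topMinor V (Fin.cons x (f ∘ σ) : Fin (k + 1) → ι) =
      Equiv.Perm.sign σ * topMinor V (Fin.cons x f : Fin (k + 1) → ι) := by
  have hcons : (Fin.cons x (f ∘ σ) : Fin (k + 1) → ι) =
      (Fin.cons x f : Fin (k + 1) → ι) ∘ Equiv.Perm.decomposeFin.symm (0, σ) := by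
    funext j
    induction j using Fin.cases <;> simp
  rw [hcons, topMinor_comp_perm, Equiv.Perm.decomposeFin.symm_sign, if_pos rfl, one_mul]

variable [LinearOrder ι]

theorem exists_cons_orderEmbOfFin_eq_comp_perm {k : ℕ} {A : Finset ι} (hA : A.card = k) {x : ι}
    (hxA : (insert x A).card = k + 1) :
    ∃ σ : Equiv.Perm (Fin (k + 1)),
      (Fin.cons x (A.orderEmbOfFin hA) : Fin (k + 1) → ι) =
        (insert x A).orderEmbOfFin hxA ∘ σ ∧
      Equiv.Perm.sign σ = (-1) ^ (A.filter (· < x)).card := by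
  let e := (insert x A).orderEmbOfFin hxA
  obtain ⟨p, hp⟩ : ∃ p, e p = x := by
    rw [← mem_range, Finset.range_orderEmbOfFin]
    exact Finset.mem_insert_self x A
  have hrank : (A.filter (· < x)).card = p := by
    rw [← card_filter_lt_orderEmbOfFin _ hxA p]
    change _ = ((insert x A).filter (· < e p)).card
    rw [hp, Finset.filter_insert, if_neg (lt_irrefl x)]
  have hremove : p.removeNth e = A.orderEmbOfFin hA := by
    refine Finset.orderEmbOfFin_unique hA (fun j => ?_)
      (e.strictMono.comp (Fin.strictMono_succAbove p))
    refine Finset.mem_of_mem_insert_of_ne ((insert x A).orderEmbOfFin_mem hxA (p.succAbove j)) ?_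
    rw [← hp]
    exact e.injective.ne (Fin.succAbove_ne p j)
  refine ⟨p.cycleRange.symm, ?_, ?_⟩
  · funext j
    rw [← hremove, ← Fin.insertNth_apply_cycleRange_symm p,
      Fin.insertNth_eq_iff.2 ⟨hp.symm, rfl⟩]
    rfl
  · rw [Equiv.Perm.sign_symm, Fin.sign_cycleRange, hrank]

/-- The top minor of the members of `T`, in increasing order. -/
def orientedMinor (V : ι → ℕ → R) (T : Finset ι) : R :=
  topMinor V (T.orderEmbOfFin rfl)

theorem orientedMinor_eq_topMinor_orderEmbOfFin (V : ι → ℕ → R) {T : Finset ι} {k : ℕ}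
    (hT : T.card = k) : orientedMinor V T = topMinor V (T.orderEmbOfFin hT) := by
  subst hT
  rfl

theorem orientedMinor_image_univ (V : ι → ℕ → R) {k : ℕ} {f : Fin k → ι} (hf : StrictMono f) :
    orientedMinor V (Finset.univ.image f) = topMinor V f := by
  have hcard : (Finset.univ.image f).card = k := by
    rw [Finset.card_image_of_injective _ hf.injective, Finset.card_fin]
  rw [orientedMinor_eq_topMinor_orderEmbOfFin V hcard,
    ← Finset.orderEmbOfFin_unique hcard
      (fun j => Finset.mem_image_of_mem f (Finset.mem_univ j)) hf]

theorem topMinor_cons_orderEmbOfFin (V : ι → ℕ → R) {A : Finset ι} {x : ι} (hx : x ∉ A) :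
    topMinor V (Fin.cons x (A.orderEmbOfFin rfl) : Fin (A.card + 1) → ι) =
      (-1) ^ (A.filter (· < x)).card * orientedMinor V (insert x A) := by
  have hcard := Finset.card_insert_of_notMem hx
  obtain ⟨σ, hcons, hσ⟩ := exists_cons_orderEmbOfFin_eq_comp_perm rfl hcard
  rw [hcons, topMinor_comp_perm, hσ, orientedMinor_eq_topMinor_orderEmbOfFin V hcard]
  push_cast
  rfl

theorem topMinor_cons_cons_orderEmbOfFin (V : ι → ℕ → R) {A : Finset ι} {x y : ι} (hxy : x < y)
    (hx : x ∉ A) (hy : y ∉ A) :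
    topMinor V (Fin.cons x (Fin.cons y (A.orderEmbOfFin rfl) : Fin (A.card + 1) → ι) :
        Fin (A.card + 2) → ι) =
      (-1) ^ ((A.filter (· < x)).card + (A.filter (· < y)).card) *
        orientedMinor V (insert x (insert y A)) := by
  have hcard := Finset.card_insert_of_notMem hy
  have hx' : x ∉ insert y A := by simp [hxy.ne, hx]
  have hcard' : (insert x (insert y A)).card = A.card + 2 := by
    rw [Finset.card_insert_of_notMem hx', hcard]
  obtain ⟨σ, hconsy, hσ⟩ := exists_cons_orderEmbOfFin_eq_comp_perm rfl hcard
  obtain ⟨τ, hconsx, hτ⟩ := exists_cons_orderEmbOfFin_eq_comp_perm hcard hcard'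
  rw [hconsy, topMinor_cons_comp_perm, hconsx, topMinor_comp_perm, hσ, hτ, Finset.filter_insert,
    if_neg hxy.not_gt, orientedMinor_eq_topMinor_orderEmbOfFin V hcard']
  push_cast
  ring

theorem orientedMinor_three_term_plucker (V : ι → ℕ → R) {A : Finset ι} {x y z : ι} (hxy : x < y)
    (hyz : y < z) (hx : x ∉ A) (hy : y ∉ A) (hz : z ∉ A) :
    orientedMinor V (insert x A) * orientedMinor V (insert y (insert z A)) -
        orientedMinor V (insert y A) * orientedMinor V (insert x (insert z A)) +
      orientedMinor V (insert z A) * orientedMinor V (insert x (insert y A)) = 0 := by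
  have hplucker := topMinor_three_term_plucker V (A.orderEmbOfFin rfl) x y z
  rw [topMinor_cons_orderEmbOfFin V hx, topMinor_cons_orderEmbOfFin V hy,
    topMinor_cons_orderEmbOfFin V hz, topMinor_cons_cons_orderEmbOfFin V hyz hy hz,
    topMinor_cons_cons_orderEmbOfFin V (hxy.trans hyz) hx hz,
    topMinor_cons_cons_orderEmbOfFin V hxy hx hy] at hplucker
  refine (isUnit_neg_one.pow ((A.filter (· < x)).card + (A.filter (· < y)).card +
    (A.filter (· < z)).card)).mul_right_eq_zero.1 ?_
  rw [← hplucker]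
  ring

end OrientedMinor

section Homogeneous

variable {ι κ : Type*}

/-- All minors on leading coordinates of distinct vectors are nonzero: every projection to leading
coordinates of the points represented by `V` is in general position. -/
def Nondegenerate (V : ι → ℕ → ℝ) : Prop :=
  ∀ (k : ℕ) (f : Fin k → ι), Function.Injective f → topMinor V f ≠ 0

theorem Nondegenerate.comp {V : ι → ℕ → ℝ} (hV : Nondegenerate V) {s : κ → ι}
    (hs : Function.Injective s) : Nondegenerate (V ∘ s) :=
  fun k f hf => hV k (s ∘ f) (hs.comp hf)

/-- All `k`-tuples with increasing indices have the same nonzero orientation sign. For vectors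
`V a = (1, x a)` with points `x a`, this is order-type homogeneity of the projections of these
points to the first `k - 1` coordinates. -/
def Homogeneous [Preorder ι] (V : ι → ℕ → ℝ) (k : ℕ) : Prop :=
  ∃ σ : SignType, σ ≠ 0 ∧ ∀ f : Fin k → ι, StrictMono f → SignType.sign (topMinor V f) = σ

namespace Homogeneous

theorem zero [Preorder ι] (V : ι → ℕ → ℝ) : Homogeneous V 0 :=
  ⟨1, one_ne_zero, fun f _ => by rw [topMinor_zero, sign_one]⟩

variable [Preorder ι] [Preorder κ] {V : ι → ℕ → ℝ} {k : ℕ}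

theorem comp (hV : Homogeneous V k) {s : κ → ι} (hs : StrictMono s) : Homogeneous (V ∘ s) k := by
  obtain ⟨σ, hσ, h⟩ := hV
  exact ⟨σ, hσ, fun f hf => h (s ∘ f) (hs.comp hf)⟩

theorem comp_strictAnti (hV : Homogeneous V k) {s : κ → ι} (hs : StrictAnti s) :
    Homogeneous (V ∘ s) k := by
  obtain ⟨σ, hσ, h⟩ := hV
  let ε : ℤ := Equiv.Perm.sign (Fin.revPerm : Equiv.Perm (Fin k))
  have hε : SignType.sign (ε : ℝ) ≠ 0 := by simp [ε]
  refine ⟨SignType.sign (ε : ℝ) * σ, mul_ne_zero hε hσ, fun f hf => ?_⟩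
  have hanti : StrictMono (s ∘ f ∘ Fin.revPerm) := fun i j hij => hs (hf (Fin.rev_lt_rev.2 hij))
  have hrev : topMinor (V ∘ s) f = ε * topMinor V (s ∘ f ∘ Fin.revPerm) := by
    rw [← topMinor_comp_perm, topMinor_comp]
    congr 1
    funext j
    simp
  rw [hrev, sign_mul, h _ hanti]

end Homogeneous

end Homogeneous

section Projection

theorem pos_iff_pos_of_three_term {a b c p q r : ℝ} (hp : 0 < p) (hq : 0 < q) (hr : 0 < r)
    (h : a * p - b * q + c * r = 0) (hab : ¬(0 < a ↔ 0 < b)) : 0 < b ↔ 0 < c := by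
  by_contra hbc
  obtain ⟨ha, hb, hc⟩ | ⟨ha, hb, hc⟩ : 0 < a ∧ b ≤ 0 ∧ 0 < c ∨ a ≤ 0 ∧ 0 < b ∧ c ≤ 0 := by
    simp only [← not_lt]
    tauto
  · linarith [mul_pos ha hp, mul_nonneg (neg_nonneg.2 hb) hq.le, mul_pos hc hr]
  · linarith [mul_nonneg (neg_nonneg.2 ha) hp.le, mul_pos hb hq, mul_nonneg (neg_nonneg.2 hc) hr.le]

theorem Homogeneous.flipSeq {n k : ℕ} {V : Fin n → ℕ → ℝ} (hV : Homogeneous V (k + 2)) :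
    FlipSeq k fun T => decide (0 < orientedMinor V T) := by
  obtain ⟨σ, hσ, h⟩ := hV
  rintro A rfl ⟨x, y, z, hxy, hyz, hx, hy, hz, hne, hne'⟩
  have hsign {u v : Fin n} (huv : u < v) (hu : u ∉ A) (hv : v ∉ A) :
      SignType.sign (orientedMinor V (insert u (insert v A))) = σ := by
    have hcard : (insert u (insert v A)).card = A.card + 2 := by
      rw [Finset.card_insert_of_notMem (by simp [huv.ne, hu]), Finset.card_insert_of_notMem hv]
    rw [orientedMinor_eq_topMinor_orderEmbOfFin V hcard]
    exact h _ (OrderEmbedding.strictMono _)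
  have hplucker := orientedMinor_three_term_plucker V hxy hyz hx hy hz
  simp only [ne_eq, decide_eq_decide] at hne hne'
  obtain rfl | rfl : σ = 1 ∨ σ = -1 := by cases σ <;> simp_all
  · simp only [sign_eq_one_iff] at hsign
    exact hne' (pos_iff_pos_of_three_term (hsign hyz hy hz) (hsign (hxy.trans hyz) hx hz)
      (hsign hxy hx hy) hplucker hne)
  · simp only [sign_eq_neg_one_iff] at hsign
    exact hne' (pos_iff_pos_of_three_term (neg_pos.2 (hsign hyz hy hz))
      (neg_pos.2 (hsign (hxy.trans hyz) hx hz)) (neg_pos.2 (hsign hxy hx hy))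
      (by linear_combination -hplucker) hne)

theorem exists_homogeneous_comp_of_succ (k : ℕ) :
    ∃ C : ℕ, ∀ (n q : ℕ) (V : Fin n → ℕ → ℝ), Nondegenerate V → Homogeneous V (k + 1) → 0 < q →
      C * q ≤ n → ∃ s : Fin q → Fin n, StrictMono s ∧ Homogeneous (V ∘ s) k := by
  obtain _ | k := k
  · exact ⟨1, fun n q V _ _ _ hqn => ⟨Fin.castLE (by lia), Fin.strictMono_castLE _, .zero _⟩⟩
  obtain ⟨C, hC⟩ := exists_intervalHomog_of_flipSeq k
  refine ⟨C, fun n q V hV hhom hq hqn => ?_⟩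
  obtain ⟨a, b, hab, σ, hσ⟩ := hC n q _ hhom.flipSeq hq hqn
  let s (t : Fin q) : Fin n := ⟨a + t, by lia⟩
  have hs : StrictMono s := fun t u htu => Nat.add_lt_add_left htu a
  have hpos (f : Fin (k + 1) → Fin q) (hf : StrictMono f) :
      decide (0 < topMinor (V ∘ s) f) = σ := by
    rw [topMinor_comp, ← orientedMinor_image_univ V (hs.comp hf)]
    refine hσ _ ?_ ?_
    · rw [Finset.card_image_of_injective _ (hs.comp hf).injective, Finset.card_fin]
    · simp only [Finset.mem_image, Finset.mem_univ, true_and, Function.comp_apply,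
        forall_exists_index, forall_apply_eq_imp_iff, Fin.le_def, s]
      lia
  have hne (f : Fin (k + 1) → Fin q) (hf : StrictMono f) : topMinor (V ∘ s) f ≠ 0 :=
    hV.comp hs.injective _ f hf.injective
  refine ⟨s, hs, if σ then 1 else -1, by split <;> decide, fun f hf => ?_⟩
  simp only [← hpos f hf, decide_eq_true_eq]
  split_ifs with h
  · exact sign_pos h
  · exact sign_neg ((not_lt.1 h).lt_of_ne (hne f hf))

theorem exists_homogeneous_comp_of_le (K : ℕ) :
    ∃ C : ℕ, ∀ (n q : ℕ) (V : Fin n → ℕ → ℝ), Nondegenerate V → Homogeneous V K → 0 < q →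
      C * q ≤ n → ∃ s : Fin q → Fin n, StrictMono s ∧ ∀ k ≤ K, Homogeneous (V ∘ s) k := by
  induction K with
  | zero =>
    refine ⟨1, fun n q V _ _ _ hqn => ⟨Fin.castLE (by lia), Fin.strictMono_castLE _, ?_⟩⟩
    rintro k hk
    obtain rfl := Nat.le_zero.1 hk
    exact .zero _
  | succ K ih =>
    obtain ⟨C, hC⟩ := ih
    obtain ⟨D, hD⟩ := exists_homogeneous_comp_of_succ K
    refine ⟨D * (C + 1), fun n q V hV hhom hq hqn => ?_⟩
    obtain ⟨s, hs, hsK⟩ := hD n ((C + 1) * q) V hV hhom (by positivity) (by rwa [← mul_assoc])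
    obtain ⟨t, ht, htk⟩ := hC _ q (V ∘ s) (hV.comp hs.injective) hsK hq (by gcongr; lia)
    refine ⟨s ∘ t, hs.comp ht, fun k hk => ?_⟩
    obtain hk | rfl := Nat.le_succ_iff.1 hk
    · exact htk k hk
    · exact hhom.comp (hs.comp ht)

end Projection

section TopDifference

variable {ι : Type*} [LinearOrder ι] {A B C : Colex (Finset ι)} {l l' : ι}

/-- `l` is the largest element of the symmetric difference of `A` and `B`, and it lies in `B`: the
witness for `A < B` in the colexicographic order. -/
structure IsTopDiff (A B : Colex (Finset ι)) (l : ι) : Prop where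
  notMem : l ∉ ofColex A
  mem : l ∈ ofColex B
  mem_iff : ∀ x, l < x → (x ∈ ofColex A ↔ x ∈ ofColex B)

theorem exists_isTopDiff (h : A < B) : ∃ l, IsTopDiff A B l := by
  obtain ⟨l, hl, hfilter⟩ :=
    (Finset.Colex.lt_iff_exists_filter_lt (s := ofColex A) (t := ofColex B)).1 h
  obtain ⟨hlB, hlA⟩ := Finset.mem_sdiff.1 hl
  refine ⟨l, hlA, hlB, fun x hx => ?_⟩
  have hmem := Finset.ext_iff.1 hfilter x
  rwa [Finset.mem_filter, Finset.mem_filter, and_iff_left hx, and_iff_left hx] at hmem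

namespace IsTopDiff

theorem ne (h : IsTopDiff A B l) (h' : IsTopDiff B C l') : l ≠ l' := by
  rintro rfl
  exact h'.notMem h.mem

theorem trans_lt (h : IsTopDiff A B l) (h' : IsTopDiff B C l') (hl : l < l') :
    IsTopDiff A C l' where
  notMem := (h.mem_iff l' hl).not.2 h'.notMem
  mem := h'.mem
  mem_iff x hx := (h.mem_iff x (hl.trans hx)).trans (h'.mem_iff x hx)

theorem trans_gt (h : IsTopDiff A B l) (h' : IsTopDiff B C l') (hl : l' < l) :
    IsTopDiff A C l where
  notMem := h.notMem
  mem := (h'.mem_iff l hl).1 h.mem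
  mem_iff x hx := (h.mem_iff x hx).trans (h'.mem_iff x (hl.trans hx))

variable {m : ℕ} {s : Fin (m + 1) → Colex (Finset ι)} {δ : Fin m → ι}

theorem of_strictMono (h : ∀ j, IsTopDiff (s j.castSucc) (s j.succ) (δ j)) (hδ : StrictMono δ)
    (i : Fin (m + 1)) (j : Fin m) (hij : i ≤ j.castSucc) : IsTopDiff (s i) (s j.succ) (δ j) := by
  induction i using Fin.reverseInduction with
  | last => exact absurd hij (Fin.castSucc_lt_last j).not_ge
  | cast i ih =>
    obtain rfl | hlt := (Fin.castSucc_le_castSucc_iff.1 hij).eq_or_lt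
    · exact h i
    · exact (h i).trans_lt (ih (Fin.succ_le_castSucc_iff.2 hlt)) (hδ hlt)

theorem of_strictAnti (h : ∀ j, IsTopDiff (s j.castSucc) (s j.succ) (δ j)) (hδ : StrictAnti δ)
    (i : Fin m) (j : Fin (m + 1)) (hij : i.castSucc < j) :
    IsTopDiff (s i.castSucc) (s j) (δ i) := by
  induction j using Fin.induction with
  | zero => exact absurd hij (Fin.not_lt_zero _)
  | succ j ih =>
    obtain rfl | hlt := (Fin.castSucc_lt_succ_iff.1 hij).eq_or_lt
    · exact h i
    · exact (ih (Fin.castSucc_lt_castSucc_iff.2 hlt)).trans_gt (h j) (hδ hlt)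

end IsTopDiff

end TopDifference

section StepUp

open Filter Topology

/-- The vectors representing the points `∑ l ∈ A, t ^ l • V l`, where `A` ranges over the sets of
indices of `V`; all coordinates of `V` are shifted by one to make room for the leading `1`. -/
def stepUp {N : ℕ} (V : Fin N → ℕ → ℝ) (t : ℝ) (A : Colex (Finset (Fin N))) : ℕ → ℝ
  | 0 => 1
  | i + 1 => ∑ l ∈ ofColex A, t ^ (l : ℕ) * V l i

theorem eventually_sign_eq_of_tendsto {α : Type*} {F : Filter α} {u : α → ℝ} {x : ℝ}
    (hu : Tendsto u F (𝓝 x)) (hx : x ≠ 0) :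
    ∀ᶠ a in F, SignType.sign (u a) = SignType.sign x := by
  have h := (continuousAt_sign_of_ne_zero hx).tendsto.comp hu
  rwa [nhds_discrete, tendsto_pure] at h

theorem eventually_forall_injective_tuple {α ι : Type*} [Finite ι] {F : Filter α}
    {P : α → ∀ k : ℕ, (Fin k → ι) → Prop}
    (h : ∀ k f, Function.Injective f → ∀ᶠ a in F, P a k f) :
    ∀ᶠ a in F, ∀ k f, Function.Injective f → P a k f := by
  have hfin : ∀ᶠ a in F, ∀ (k : Fin (Nat.card ι + 1)) (f : Fin k → ι),
      Function.Injective f → P a k f := by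
    simp only [eventually_all]
    exact fun k f hf => h k f hf
  filter_upwards [hfin] with a ha k f hf
  have hk : k ≤ Nat.card ι := by simpa using Nat.card_le_card_of_injective f hf
  exact ha ⟨k, Nat.lt_succ_of_le hk⟩ f hf

variable {N : ℕ} (V : Fin N → ℕ → ℝ)

theorem tendsto_stepUp_sub_div {A B : Colex (Finset (Fin N))} {l : Fin N}
    (h : IsTopDiff A B l) (i : ℕ) :
    Tendsto (fun t => (stepUp V t B (i + 1) - stepUp V t A (i + 1)) / t ^ (l : ℕ)) atTop
      (𝓝 (V l i)) := by
  let c (x : Fin N) : ℝ := (if x ∈ ofColex B then V x i else 0) - if x ∈ ofColex A then V x i else 0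
  have hsum (t : ℝ) : (stepUp V t B (i + 1) - stepUp V t A (i + 1)) / t ^ (l : ℕ) =
      ∑ x, c x * (t ^ (x : ℕ) / t ^ (l : ℕ)) := by
    simp only [stepUp, c, sub_mul, Finset.sum_sub_distrib, ite_mul, zero_mul, Finset.sum_ite_mem,
      Finset.univ_inter, sub_div, Finset.sum_div]
    congr 1 <;> exact Finset.sum_congr rfl fun x _ => by ring
  have hterm (x : Fin N) : Tendsto (fun t : ℝ => c x * (t ^ (x : ℕ) / t ^ (l : ℕ))) atTop
      (𝓝 (if x = l then V l i else 0)) := by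
    obtain hlt | rfl | hgt := lt_trichotomy x l
    · simpa [hlt.ne] using (tendsto_pow_div_pow_atTop_zero hlt).const_mul (c x)
    · refine tendsto_const_nhds.congr' ?_
      filter_upwards [eventually_ne_atTop 0] with t ht
      simp [c, h.mem, h.notMem, ht]
    · simp [c, h.mem_iff x hgt, hgt.ne']
  simp only [hsum]
  simpa using tendsto_finsetSum Finset.univ fun x _ => hterm x

theorem eventually_sign_topMinor_stepUp {k : ℕ} {a : Fin (k + 1) → Colex (Finset (Fin N))}
    {e : Fin k → Fin N} (h : ∀ j, IsTopDiff (a j.castSucc) (a j.succ) (e j))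
    (he : topMinor V e ≠ 0) :
    ∀ᶠ t in atTop, SignType.sign (topMinor (stepUp V t) a) = SignType.sign (topMinor V e) := by
  let D (t : ℝ) : Matrix (Fin k) (Fin k) ℝ := Matrix.of fun i j =>
    (stepUp V t (a j.succ) (i + 1) - stepUp V t (a j.castSucc) (i + 1)) / t ^ (e j : ℕ)
  have hD : Tendsto (fun t => (D t).det) atTop (𝓝 (topMinor V e)) :=
    (continuous_id.matrix_det.tendsto _).comp <| tendsto_pi_nhds.2 fun i =>
      tendsto_pi_nhds.2 fun j => tendsto_stepUp_sub_div V (h j) i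
  filter_upwards [eventually_sign_eq_of_tendsto hD he, eventually_gt_atTop 0] with t hsign ht
  have hscale : topMinor (stepUp V t) a = (∏ j, t ^ (e j : ℕ)) * (D t).det := by
    rw [topMinor_succ_eq_det_sub (fun _ => rfl), ← Matrix.det_mul_row]
    congr 1
    ext i j
    exact (mul_div_cancel₀ _ (pow_pos ht _).ne').symm
  rw [hscale, sign_mul, sign_pos (Finset.prod_pos fun j _ => pow_pos ht _), one_mul, hsign]

end StepUp

section Perturbation

open Filter Topology Polynomial

variable {ι : Type*}

theorem nondegenerate_pow {x : ι → ℝ} (hx : Function.Injective x) :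
    Nondegenerate fun a i => x a ^ i := by
  intro k f hf
  have hdet : topMinor (fun a i => x a ^ i) f = (Matrix.vandermonde (x ∘ f)).det := by
    rw [← Matrix.det_transpose]
    rfl
  rw [hdet]
  exact Matrix.det_vandermonde_ne_zero_iff.2 (hx.comp hf)

theorem exists_eval_eq_topMinor_lineMap (V U : ι → ℕ → ℝ) {k : ℕ} (f : Fin k → ι) :
    ∃ p : ℝ[X], ∀ η, p.eval η = topMinor (AffineMap.lineMap V U η) f := by
  refine ⟨topMinor (fun a i => X * (C (U a i) - C (V a i)) + C (V a i)) f, fun η => ?_⟩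
  rw [← coe_evalRingHom, map_topMinor]
  congr 1
  funext a i
  simp [AffineMap.lineMap_apply]

theorem eventually_topMinor_lineMap (V U : ι → ℕ → ℝ) {k : ℕ} {f : Fin k → ι}
    (hU : topMinor U f ≠ 0) :
    ∀ᶠ η in 𝓝[≠] (0 : ℝ), topMinor (AffineMap.lineMap V U η) f ≠ 0 ∧ (topMinor V f ≠ 0 →
      SignType.sign (topMinor (AffineMap.lineMap V U η) f) = SignType.sign (topMinor V f)) := by
  obtain ⟨p, hp⟩ := exists_eval_eq_topMinor_lineMap V U f
  have hp_one : p.eval 1 = topMinor U f := by rw [hp, AffineMap.lineMap_apply_one]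
  have hp_zero : p.eval 0 = topMinor V f := by rw [hp, AffineMap.lineMap_apply_zero]
  have hp_ne : p ≠ 0 := by
    rintro rfl
    exact hU (hp_one.symm.trans eval_zero)
  simp only [← hp, ← hp_zero]
  refine Eventually.and ?_ ?_
  · refine nhdsNE_le_cofinite _ (eventually_cofinite.2 ?_)
    simpa using finite_setOfPred_isRoot hp_ne
  · by_cases h0 : p.eval 0 = 0
    · exact Eventually.of_forall fun η h => absurd h0 h
    · filter_upwards [eventually_sign_eq_of_tendsto
        (p.continuous.continuousAt.mono_left nhdsWithin_le_nhds) h0] with η h _ using h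

theorem exists_nondegenerate_of_finite [Finite ι] (V : ι → ℕ → ℝ) (hV : ∀ a, V a 0 = 1) :
    ∃ W : ι → ℕ → ℝ, (∀ a, W a 0 = 1) ∧ Nondegenerate W ∧
      ∀ (k : ℕ) (f : Fin k → ι), topMinor V f ≠ 0 →
        SignType.sign (topMinor W f) = SignType.sign (topMinor V f) := by
  let x (a : ι) : ℝ := (Finite.equivFin ι a : ℕ)
  have hx : Function.Injective x :=
    Nat.cast_injective.comp (Fin.val_injective.comp (Finite.equivFin ι).injective)
  obtain ⟨η, hη⟩ := (eventually_forall_injective_tuple fun _ f hf =>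
    eventually_topMinor_lineMap V (fun a i => x a ^ i) (nondegenerate_pow hx _ f hf)).exists
  refine ⟨AffineMap.lineMap V (fun a i => x a ^ i) η, fun a => ?_, fun k f hf => (hη k f hf).1,
    fun k f hf => (hη k f ?_).2 hf⟩
  · simp [AffineMap.lineMap_apply, hV]
  · by_contra h
    exact hf (topMinor_eq_zero_of_not_injective V h)

end Perturbation

section StepUpHomogeneous

open Filter

variable {N : ℕ}

/-- `W` is a generic stepping-up of `V`: its vectors are indexed by the sets of indices of `V`, and
the orientation of a chain of `k + 1` sets is that of the `k` top differences of consecutive sets,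
as soon as the latter is nonzero. -/
structure IsStepUp (V : Fin N → ℕ → ℝ) (W : Colex (Finset (Fin N)) → ℕ → ℝ) : Prop where
  coord_zero : ∀ A, W A 0 = 1
  nondegenerate : Nondegenerate W
  sign_topMinor : ∀ {k : ℕ} {a : Fin (k + 1) → Colex (Finset (Fin N))} {e : Fin k → Fin N},
    (∀ j, IsTopDiff (a j.castSucc) (a j.succ) (e j)) → topMinor V e ≠ 0 →
      SignType.sign (topMinor W a) = SignType.sign (topMinor V e)

theorem exists_isStepUp (V : Fin N → ℕ → ℝ) : ∃ W, IsStepUp V W := by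
  have : Finite (Colex (Finset (Fin N))) := Finite.of_equiv _ toColex
  have hlarge : ∀ᶠ t in atTop, ∀ (k : ℕ) (e : Fin k → Fin N), Function.Injective e →
      ∀ a : Fin (k + 1) → Colex (Finset (Fin N)),
        (∀ j, IsTopDiff (a j.castSucc) (a j.succ) (e j)) → topMinor V e ≠ 0 →
          SignType.sign (topMinor (stepUp V t) a) = SignType.sign (topMinor V e) := by
    refine eventually_forall_injective_tuple fun k e _ => ?_
    simp only [eventually_all]
    exact fun a ha he => eventually_sign_topMinor_stepUp V ha he
  obtain ⟨t, ht⟩ := hlarge.exists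
  obtain ⟨W, hW0, hW, hsign⟩ := exists_nondegenerate_of_finite (stepUp V t) fun _ => rfl
  refine ⟨W, hW0, hW, fun {k a e} ha he => ?_⟩
  have hinj : Function.Injective e := by
    by_contra h
    exact he (topMinor_eq_zero_of_not_injective V h)
  have hchain := ht k e hinj a ha he
  rw [← hchain, hsign]
  rwa [← sign_ne_zero, hchain, sign_ne_zero]

namespace IsStepUp

variable {V : Fin N → ℕ → ℝ} {W : Colex (Finset (Fin N)) → ℕ → ℝ}

theorem coord_one_lt (hW : IsStepUp V W) {l : Fin N} (hl : V l 0 = 1)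
    {A B : Colex (Finset (Fin N))} (h : IsTopDiff A B l) : W A 1 < W B 1 := by
  have hV : topMinor V ![l] = 1 := by simp [topMinor, hl]
  have hchain (j : Fin 1) : IsTopDiff (![A, B] j.castSucc) (![A, B] j.succ) (![l] j) := by
    fin_cases j
    exact h
  have hsign := hW.sign_topMinor hchain (by simp [hV])
  rw [hV, sign_one, sign_eq_one_iff, topMinor_two hW.coord_zero] at hsign
  exact sub_pos.1 hsign

variable {m : ℕ} {s : Fin (m + 1) → Colex (Finset (Fin N))} {δ : Fin m → Fin N}

theorem homogeneous_topDiff (hW : IsStepUp V W) (hV : Nondegenerate V)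
    (hδ : Function.Injective δ) {k : ℕ} (hs : Homogeneous (W ∘ s) (k + 1))
    (hlift : ∀ f : Fin k → Fin m, StrictMono f → ∃ g : Fin (k + 1) → Fin (m + 1), StrictMono g ∧
      ∀ j, IsTopDiff (s (g j.castSucc)) (s (g j.succ)) (δ (f j))) :
    Homogeneous (V ∘ δ) k := by
  obtain ⟨σ, hσ, h⟩ := hs
  refine ⟨σ, hσ, fun f hf => ?_⟩
  obtain ⟨g, hg, hchain⟩ := hlift f hf
  rw [← h g hg]
  exact (hW.sign_topMinor hchain (hV.comp hδ k f hf.injective)).symm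

theorem homogeneous_topDiff_of_strictMono (hW : IsStepUp V W) (hV : Nondegenerate V)
    (hs : ∀ j, IsTopDiff (s j.castSucc) (s j.succ) (δ j)) (hδ : StrictMono δ) {k : ℕ}
    (hhom : Homogeneous (W ∘ s) (k + 1)) : Homogeneous (V ∘ δ) k := by
  refine hW.homogeneous_topDiff hV hδ.injective hhom fun f hf => ?_
  have hg : StrictMono (Fin.cons 0 (Fin.succ ∘ f) : Fin (k + 1) → Fin (m + 1)) :=
    Fin.strictMono_cons.2 ⟨fun _ => Fin.succ_pos _, Fin.strictMono_succ.comp hf⟩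
  exact ⟨_, hg, fun j => .of_strictMono hs hδ _ _ (Fin.le_castSucc_iff.2 (hg j.castSucc_lt_succ))⟩

theorem homogeneous_topDiff_of_strictAnti (hW : IsStepUp V W) (hV : Nondegenerate V)
    (hs : ∀ j, IsTopDiff (s j.castSucc) (s j.succ) (δ j)) (hδ : StrictAnti δ) {k : ℕ}
    (hhom : Homogeneous (W ∘ s) (k + 1)) : Homogeneous (V ∘ δ) k := by
  refine hW.homogeneous_topDiff hV hδ.injective hhom fun f hf => ?_
  let g : Fin (k + 1) → Fin (m + 1) := Fin.snoc (Fin.castSucc ∘ f) (Fin.last m)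
  have hg : StrictMono g := by
    simp only [g, ← Fin.insertNth_last', Fin.strictMono_insertNth_iff]
    exact ⟨Fin.strictMono_castSucc.comp hf, fun i _ => Fin.castSucc_lt_last _,
      fun i hi => absurd hi i.castSucc_lt_last.not_ge⟩
  have hgf (j : Fin k) : g j.castSucc = (f j).castSucc := Fin.snoc_castSucc ..
  refine ⟨g, hg, fun j => ?_⟩
  have hj := hg j.castSucc_lt_succ
  rw [hgf] at hj ⊢
  exact .of_strictAnti hs hδ _ _ hj

theorem strictMono_or_strictAnti (hW : IsStepUp V W) (hV₀ : ∀ a, V a 0 = 1)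
    (hV₁ : StrictMono fun a => V a 1) (hs : ∀ j, IsTopDiff (s j.castSucc) (s j.succ) (δ j))
    (hhom : Homogeneous (W ∘ s) 3) : StrictMono δ ∨ StrictAnti δ := by
  obtain _ | m := m
  · exact .inl fun i => i.elim0
  obtain ⟨σ, hσ, h⟩ := hhom
  have hsign (i : Fin m) :
      SignType.sign (V (δ i.succ) 1 - V (δ i.castSucc) 1) = σ := by
    let g : Fin 3 → Fin (m + 2) := ![i.castSucc.castSucc, i.castSucc.succ, i.succ.succ]
    have hg : StrictMono g := by simp [g]
    have hchain (j : Fin 2) : IsTopDiff (s (g j.castSucc)) (s (g j.succ))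
        (![δ i.castSucc, δ i.succ] j) := by
      fin_cases j
      · exact hs i.castSucc
      · exact hs i.succ
    have hV : topMinor V ![δ i.castSucc, δ i.succ] = V (δ i.succ) 1 - V (δ i.castSucc) 1 :=
      topMinor_two hV₀ _
    have hne : V (δ i.succ) 1 ≠ V (δ i.castSucc) 1 :=
      hV₁.injective.ne ((hs i.castSucc).ne (hs i.succ)).symm
    rw [← h g hg, ← hV]
    exact (hW.sign_topMinor hchain (by rwa [hV, sub_ne_zero])).symm
  rw [Fin.strictMono_iff_lt_succ, Fin.strictAnti_iff_succ_lt]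
  obtain rfl | rfl | rfl := σ.trichotomy
  · simp only [sign_eq_neg_one_iff, sub_neg] at hsign
    exact .inr fun i => hV₁.lt_iff_lt.1 (hsign i)
  · exact absurd rfl hσ
  · simp only [sign_eq_one_iff, sub_pos] at hsign
    exact .inl fun i => hV₁.lt_iff_lt.1 (hsign i)

end IsStepUp

end StepUpHomogeneous

section Obstruction

/-- The vectors `V a` represent generic points, increasing in their first coordinate, no `m` of
which have homogeneous projections to their first `k - 1` coordinates for all `k ≤ K`
simultaneously. -/
structure IsObstruction {ι : Type*} [Preorder ι] (V : ι → ℕ → ℝ) (K m : ℕ) : Prop where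
  coord_zero : ∀ a, V a 0 = 1
  nondegenerate : Nondegenerate V
  strictMono_coord_one : StrictMono fun a => V a 1
  exists_not_homogeneous :
    ∀ s : Fin m → ι, StrictMono s → ∃ k ≤ K, ¬Homogeneous (V ∘ s) k

namespace IsObstruction

variable {K m N : ℕ}

theorem comp {ι κ : Type*} [Preorder ι] [LinearOrder κ] {V : ι → ℕ → ℝ}
    (hV : IsObstruction V K m) {s : κ → ι} (hs : StrictMono s) : IsObstruction (V ∘ s) K m where
  coord_zero a := hV.coord_zero (s a)
  nondegenerate := hV.nondegenerate.comp hs.injective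
  strictMono_coord_one := hV.strictMono_coord_one.comp hs
  exists_not_homogeneous t ht := hV.exists_not_homogeneous (s ∘ t) (hs.comp ht)

theorem pow (N K : ℕ) : IsObstruction (fun (a : Fin N) i => (a : ℝ) ^ i) K (N + 1) where
  coord_zero _ := pow_zero _
  nondegenerate := nondegenerate_pow (Nat.cast_injective.comp Fin.val_injective)
  strictMono_coord_one a b hab := by simpa using hab
  exists_not_homogeneous s hs := by
    have hcard := Fintype.card_le_of_injective s hs.injective
    simp at hcard

theorem of_isStepUp {V : Fin N → ℕ → ℝ} (hV : IsObstruction V K m) (hK : 2 ≤ K)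
    {W : Colex (Finset (Fin N)) → ℕ → ℝ} (hW : IsStepUp V W) :
    IsObstruction W (K + 1) (m + 1) where
  coord_zero := hW.coord_zero
  nondegenerate := hW.nondegenerate
  strictMono_coord_one A B hAB := by
    obtain ⟨l, hl⟩ := exists_isTopDiff hAB
    exact hW.coord_one_lt (hV.coord_zero l) hl
  exists_not_homogeneous s hs := by
    by_contra! hhom
    choose δ hδ using fun j : Fin m => exists_isTopDiff (hs j.castSucc_lt_succ)
    obtain hmono | hanti := hW.strictMono_or_strictAnti hV.coord_zero hV.strictMono_coord_one hδ
      (hhom 3 (Nat.succ_le_succ hK))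
    · obtain ⟨k, hk, hnot⟩ := hV.exists_not_homogeneous δ hmono
      exact hnot (hW.homogeneous_topDiff_of_strictMono hV.nondegenerate hδ hmono
        (hhom (k + 1) (Nat.succ_le_succ hk)))
    · obtain ⟨k, hk, hnot⟩ := hV.exists_not_homogeneous (δ ∘ Fin.rev)
        (hanti.comp Fin.rev_strictAnti)
      exact hnot ((hW.homogeneous_topDiff_of_strictAnti hV.nondegenerate hδ hanti
        (hhom (k + 1) (Nat.succ_le_succ hk))).comp_strictAnti Fin.rev_strictAnti)

theorem exists_succ {V : Fin N → ℕ → ℝ} (hV : IsObstruction V K m) (hK : 2 ≤ K) :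
    ∃ W : Fin (2 ^ N) → ℕ → ℝ, IsObstruction W (K + 1) (m + 1) := by
  obtain ⟨W, hW⟩ := exists_isStepUp V
  have : Fintype (Colex (Finset (Fin N))) := Fintype.ofEquiv _ toColex
  have hcard : Fintype.card (Colex (Finset (Fin N))) = 2 ^ N := by
    rw [← Fintype.card_congr (toColex : Finset (Fin N) ≃ _), Fintype.card_finset, Fintype.card_fin]
  exact ⟨_, (hV.of_isStepUp hK hW).comp (Fintype.orderIsoFinOfCardEq _ hcard).strictMono⟩

end IsObstruction

theorem twr_succ {d : ℕ} (hd : 1 ≤ d) (x : ℕ) : twr (d + 1) x = 2 ^ twr d x := by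
  obtain ⟨e, rfl⟩ := Nat.exists_eq_add_of_le' hd
  exact Function.iterate_succ_apply' _ e x

theorem exists_isObstruction_twr {d : ℕ} (hd : 1 ≤ d) (x : ℕ) :
    ∃ V : Fin (twr d x) → ℕ → ℝ, IsObstruction V (d + 1) (x + d) := by
  induction d, hd using Nat.le_induction with
  | base => exact ⟨_, .pow x 2⟩
  | succ d hd ih =>
    obtain ⟨V, hV⟩ := ih
    rw [twr_succ hd]
    exact hV.exists_succ (Nat.succ_le_succ hd)

end Obstruction

section Points

variable {ι : Type*}

theorem affineIndependent_iff_linearIndependent_cons {K : Type*} [Ring K] {d : ℕ}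
    (q : ι → Fin d → K) :
    AffineIndependent K q ↔ LinearIndependent K fun j => (Fin.cons 1 (q j) : Fin (d + 1) → K) := by
  have hsum (s : Finset ι) (w : ι → K) :
      ∑ j ∈ s, w j • (Fin.cons 1 (q j) : Fin (d + 1) → K) = 0 ↔
        ∑ j ∈ s, w j = 0 ∧ ∑ j ∈ s, w j • q j = 0 := by
    simp [funext_iff, Fin.forall_fin_succ]
  simp only [affineIndependent_iff, linearIndependent_iff', hsum, and_imp]

/-- The point of `ℝ^d` whose homogeneous coordinates `(1, x)` are the first `d + 1` coordinates of
the vector `V a`. -/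
def toPoint (V : ι → ℕ → ℝ) (d : ℕ) (a : ι) (i : Fin d) : ℝ :=
  V a (i + 1)

theorem cons_one_toPoint {V : ι → ℕ → ℝ} {a : ι} (ha : V a 0 = 1) (d : ℕ) :
    (Fin.cons 1 (toPoint V d a) : Fin (d + 1) → ℝ) = fun i : Fin (d + 1) => V a i := by
  funext i
  induction i using Fin.cases <;> simp [toPoint, ha]

theorem otSign_toPoint {V : ι → ℕ → ℝ} (hV : ∀ a, V a 0 = 1) {d : ℕ} (f : Fin (d + 1) → ι) :
    otSign (fun j => toPoint V d (f j)) = Real.sign (topMinor V f) := by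
  simp only [otSign, cons_one_toPoint (hV _), topMinor]

theorem affineIndependent_toPoint {V : ι → ℕ → ℝ} (hV : ∀ a, V a 0 = 1) {d k : ℕ}
    (hk : k ≤ d + 1) {f : Fin k → ι} (hf : topMinor V f ≠ 0) :
    AffineIndependent ℝ fun j => toPoint V d (f j) := by
  rw [affineIndependent_iff_linearIndependent_cons]
  simp only [cons_one_toPoint (hV _)]
  exact (Matrix.linearIndependent_cols_of_det_ne_zero hf).of_comp
    (LinearMap.funLeft ℝ ℝ (Fin.castLE hk))

theorem generalPosition_toPoint {N : ℕ} {V : Fin N → ℕ → ℝ} (hV₀ : ∀ a, V a 0 = 1)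
    (hV : Nondegenerate V) (d : ℕ) : GeneralPosition (toPoint V d) := by
  intro s hs
  rw [← affineIndependent_equiv (s.orderIsoOfFin rfl).toEquiv]
  exact affineIndependent_toPoint hV₀ hs
    (hV _ _ (Subtype.val_injective.comp (s.orderIsoOfFin rfl).injective))

theorem sign_real_sign (x : ℝ) : SignType.sign (Real.sign x) = SignType.sign x := by
  obtain hx | rfl | hx := lt_trichotomy x 0
  · rw [Real.sign_of_neg hx, Left.sign_neg, sign_one, sign_neg hx]
  · rw [Real.sign_zero]
  · rw [Real.sign_of_pos hx, sign_one, sign_pos hx]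

theorem homogeneous_of_orderTypeHomogeneous {n d : ℕ} {V : Fin n → ℕ → ℝ}
    (hV : ∀ a, V a 0 = 1) (h : OrderTypeHomogeneous (toPoint V d)) : Homogeneous V (d + 1) := by
  obtain ⟨σ, hσ, h⟩ := h
  refine ⟨SignType.sign σ, sign_ne_zero.2 hσ, fun f hf => ?_⟩
  rw [← h f hf, otSign_toPoint hV, sign_real_sign]

theorem exists_generalPosition_not_orderTypeHomogeneous {d : ℕ} (hd : 1 ≤ d) :
    ∃ C : ℕ, ∀ x n N : ℕ, C * (x + d) ≤ n → N ≤ twr d x →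
      ∃ p : Fin N → Fin d → ℝ, GeneralPosition p ∧
        ¬∃ f : Fin n → Fin N, StrictMono f ∧ OrderTypeHomogeneous fun i => p (f i) := by
  obtain ⟨C, hC⟩ := exists_homogeneous_comp_of_le (d + 1)
  refine ⟨C, fun x n N hn hN => ?_⟩
  obtain ⟨U, hU⟩ := exists_isObstruction_twr hd x
  have hV := hU.comp (Fin.strictMono_castLE hN)
  refine ⟨_, generalPosition_toPoint hV.coord_zero hV.nondegenerate d, ?_⟩
  rintro ⟨f, hf, hhom⟩
  have hVf := hV.comp hf
  obtain ⟨s, hs, hsk⟩ := hC n (x + d) _ hVf.nondegenerate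
    (homogeneous_of_orderTypeHomogeneous hVf.coord_zero hhom) (by lia) hn
  obtain ⟨k, hk, hnot⟩ := hVf.exists_not_homogeneous s hs
  exact hnot (hsk k hk)

end Points

section Finiteness

theorem otSign_ne_zero_of_affineIndependent {d : ℕ} {q : Fin (d + 1) → Fin d → ℝ}
    (hq : AffineIndependent ℝ q) : otSign q ≠ 0 := by
  rw [affineIndependent_iff_linearIndependent_cons] at hq
  have hunit : IsUnit (Matrix.of fun i j => (Fin.cons 1 (q j) : Fin (d + 1) → ℝ) i) :=
    Matrix.linearIndependent_cols_iff_isUnit.1 hq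
  exact Real.sign_eq_zero_iff.not.2 ((Matrix.isUnit_iff_isUnit_det _).1 hunit).ne_zero

theorem otSign_eq_neg_one_or_one {d N : ℕ} {p : Fin N → Fin d → ℝ} (hp : GeneralPosition p)
    {h : Fin (d + 1) → Fin N} (hh : Function.Injective h) :
    otSign (fun j => p (h j)) = -1 ∨ otSign (fun j => p (h j)) = 1 := by
  have hcard : (Finset.univ.map ⟨h, hh⟩).card = d + 1 := by simp
  have haff := (hp _ hcard.le).comp_embedding
    ⟨fun j => ⟨h j, Finset.mem_map_of_mem ⟨h, hh⟩ (Finset.mem_univ j)⟩,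
      fun i j hij => hh (Subtype.ext_iff.1 hij)⟩
  exact Real.sign_apply_eq_of_ne_zero _
    (Real.sign_eq_zero_iff.not.1 (otSign_ne_zero_of_affineIndependent haff))

theorem finsetSign_image_univ {d N : ℕ} (p : Fin N → Fin d → ℝ) {h : Fin (d + 1) → Fin N}
    (hh : StrictMono h) : finsetSign p (Finset.univ.image h) = otSign fun j => p (h j) := by
  have hcard : (Finset.univ.image h).card = d + 1 := by
    rw [Finset.card_image_of_injective _ hh.injective, Finset.card_fin]
  have hh_eq : h = (Finset.univ.image h).orderEmbOfFin hcard :=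
    Finset.orderEmbOfFin_unique hcard (fun j => Finset.mem_image_of_mem h (Finset.mem_univ j)) hh
  rw [finsetSign, dif_pos hcard]
  congr
  funext j
  exact congrArg p (congrFun hh_eq j).symm

theorem exists_orderTypeHomogeneous (d n : ℕ) :
    ∃ N : ℕ, ∀ p : Fin N → Fin d → ℝ, GeneralPosition p →
      ∃ f : Fin n → Fin N, StrictMono f ∧ OrderTypeHomogeneous fun i => p (f i) := by
  obtain ⟨N, hN⟩ := exists_monochromatic_powersetCard n (d + 1)
  refine ⟨N, fun p hp => ?_⟩
  obtain ⟨H, -, hH, σ, hσ⟩ := hN Finset.univ (fun T => decide (finsetSign p T = 1))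
    (Finset.card_fin N).ge
  let f := H.orderEmbOfFin hH
  have hsign (g : Fin (d + 1) → Fin n) (hg : StrictMono g) :
      decide (otSign (fun j => p (f (g j))) = 1) = σ := by
    have hfg : StrictMono (f ∘ g) := f.strictMono.comp hg
    rw [← hσ (Finset.univ.image (f ∘ g)), finsetSign_image_univ p hfg]
    · rfl
    · rw [Finset.mem_powersetCard, Finset.card_image_of_injective _ hfg.injective, Finset.card_fin]
      exact ⟨Finset.image_subset_iff.2 fun j _ => H.orderEmbOfFin_mem hH _, rfl⟩
  refine ⟨f, f.strictMono, if σ then 1 else -1, by split <;> norm_num, fun g hg => ?_⟩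
  have hcases := otSign_eq_neg_one_or_one hp (f.injective.comp hg.injective)
  simp only [← hsign g hg, decide_eq_true_eq]
  split_ifs with h
  · exact h
  · exact hcases.resolve_right h

theorem le_OTNum {d n M : ℕ} (h : ∀ N < M, ∃ p : Fin N → Fin d → ℝ, GeneralPosition p ∧
    ¬∃ f : Fin n → Fin N, StrictMono f ∧ OrderTypeHomogeneous fun i => p (f i)) :
    M ≤ OTNum d n := by
  refine le_csInf (exists_orderTypeHomogeneous d n) fun N hN => ?_
  by_contra! hlt
  obtain ⟨p, hp, hnot⟩ := h N hlt
  exact hnot (hN p hp)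

theorem exists_pos_forall_mul_ceil_add_le (C d : ℕ) :
    ∃ c : ℝ, 0 < c ∧ ∃ n₀ : ℕ, ∀ n, n₀ ≤ n → C * (⌈c * (n : ℝ)⌉₊ + d) ≤ n := by
  let c : ℝ := (2 * (C + 1))⁻¹
  have hc : 0 < c := by positivity
  have hCc : C * c ≤ 1 / 2 := by
    have h : (C + 1) * c = 1 / 2 := by
      simp only [c]
      field_simp
    linarith
  refine ⟨c, hc, 2 * C * (d + 1), fun n hn => ?_⟩
  have hn' : 2 * (C : ℝ) * (d + 1) ≤ n := mod_cast hn
  have hceil : (⌈c * (n : ℝ)⌉₊ : ℝ) ≤ c * n + 1 := (Nat.ceil_lt_add_one (by positivity)).le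
  have hreal : (C : ℝ) * (⌈c * (n : ℝ)⌉₊ + d) ≤ n := by
    calc (C : ℝ) * (⌈c * (n : ℝ)⌉₊ + d) ≤ C * (c * n + 1 + d) := by gcongr
      _ = C * c * n + C * (d + 1) := by ring
      _ ≤ 1 / 2 * n + C * (d + 1) := by gcongr
      _ ≤ n := by linarith
  exact_mod_cast hreal

end Finiteness

/-- For every `d ≥ 2` there is a constant `c > 0` such that for all
sufficiently large `n` we have `OT_d(n) ≥ twr_d(⌈c·n⌉)`; equivalently, there is a sequence
of `twr_d(⌈c·n⌉) - 1` points in general position in `ℝ^d` with no order-type homogeneous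
subsequence of length `n`. -/
theorem OT_lower_bound :
    ∀ d : ℕ, 2 ≤ d → ∃ c : ℝ, 0 < c ∧ ∃ n₀ : ℕ, ∀ n : ℕ, n₀ ≤ n →
      twr d ⌈c * (n : ℝ)⌉₊ ≤ OTNum d n ∧
      ∃ p : Fin (twr d ⌈c * (n : ℝ)⌉₊ - 1) → (Fin d → ℝ), GeneralPosition p ∧
        ¬ ∃ f : Fin n → Fin (twr d ⌈c * (n : ℝ)⌉₊ - 1), StrictMono f ∧
            OrderTypeHomogeneous (fun i => p (f i)) := by
  intro d hd
  obtain ⟨C, hC⟩ := exists_generalPosition_not_orderTypeHomogeneous (one_le_two.trans hd)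
  obtain ⟨c, hc, n₀, hn₀⟩ := exists_pos_forall_mul_ceil_add_le C d
  refine ⟨c, hc, n₀, fun n hn => ?_⟩
  have hbad (N : ℕ) (hN : N ≤ twr d ⌈c * (n : ℝ)⌉₊) := hC _ n N (hn₀ n hn) hN
  exact ⟨le_OTNum fun N hN => hbad N hN.le, hbad _ (Nat.sub_le _ 1)⟩
end

section
/- Let k ≥ 2 and let c ≥ 1 be such that the greedy partition of every flip (k−1)-sequence has at most c blocks. Then the greedy partition of every flip k-sequence has at most 1 + (4k+10)c/k blocks. -/
open Set

/-!
Fix the first element `0` of a flip `k`-sequence and consider the link of `0`, the flip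
`(k - 1)`-sequence with signs `B ↦ sgn ({0} ∪ B)`. If the link is constantly `σ` on an interval,
then, since the sign sequence of a `k`-set `B` of this interval starts with `σ`, moving an element
of a `(k + 1)`-set to the right never turns a sign different from `σ` into `σ`. Hence the interval
cannot contain two consecutive greedy blocks together with the point following each of them: the
first block with its next point contains a `(k + 1)`-set of sign different from `σ`, which can be
moved to the right onto one of sign `σ` in the second block with its next point. So each greedy
block of the link uses up at most two greedy blocks of the sequence.
-/

section IntervalHomog

variable {n k : ℕ} {sgn : Finset (Fin n) → Bool} {a a' b b' : Fin n}

theorem intervalHomog_iff :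
    IntervalHomog k sgn a b ↔ ∃ σ, ∀ s ⊆ Finset.Icc a b, s.card = k + 1 → sgn s = σ := by
  simp only [IntervalHomog, Finset.subset_iff, Finset.mem_Icc]
  exact exists_congr fun σ => forall_congr' fun s => forall_comm

theorem exists_sign_ne_of_not_intervalHomog (h : ¬ IntervalHomog k sgn a b) (σ : Bool) :
    ∃ s ⊆ Finset.Icc a b, s.card = k + 1 ∧ sgn s ≠ σ := by
  rw [intervalHomog_iff] at h
  push Not at h
  exact h σ

theorem IntervalHomog.mono (h : IntervalHomog k sgn a b) (ha : a ≤ a') (hb : b' ≤ b) :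
    IntervalHomog k sgn a' b' := by
  obtain ⟨σ, hσ⟩ := h
  exact ⟨σ, fun s hs hsub => hσ s hs fun i hi =>
    ⟨ha.trans (hsub i hi).1, (hsub i hi).2.trans hb⟩⟩

theorem intervalHomog_of_le_add_one (hk : 1 ≤ k) (sgn : Finset (Fin n) → Bool)
    (hab : (b : ℕ) ≤ a + 1) : IntervalHomog k sgn a b := by
  refine intervalHomog_iff.2 ⟨sgn (Finset.Icc a b), fun s hs hcard => ?_⟩
  rw [Finset.eq_of_subset_of_card_le hs]
  rw [Fin.card_Icc]
  omega

theorem add_one_lt_of_not_intervalHomog (hk : 1 ≤ k) (h : ¬ IntervalHomog k sgn a b) :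
    (a : ℕ) + 1 < b :=
  not_le.1 (mt (intervalHomog_of_le_add_one hk sgn) h)

end IntervalHomog

section GreedyPartition

variable {n k m : ℕ} {sgn : Finset (Fin n) → Bool}

/-- The greedy partition, as in `IsGreedyPartition`, of the final segment of a `k`-sequence that
starts at the index `a`. -/
structure IsGreedyPartitionFrom (k : ℕ) (sgn : Finset (Fin n) → Bool) (a : Fin n) (m : ℕ)
    (c : Fin (m + 1) → Fin n) : Prop where
  zero : c 0 = a
  last : (c (Fin.last m) : ℕ) = n - 1
  strictMono : StrictMono c
  homog : ∀ j : Fin m, IntervalHomog k sgn (c j.castSucc) (c j.succ)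
  maximal : ∀ j : Fin m, ∀ e, c j.succ < e → ¬ IntervalHomog k sgn (c j.castSucc) e

theorem IsGreedyPartitionFrom.vecCons {c : Fin (m + 1) → Fin n} {a e : Fin n}
    (hc : IsGreedyPartitionFrom k sgn e m c) (hae : a < e)
    (he : Maximal (IntervalHomog k sgn a) e) :
    IsGreedyPartitionFrom k sgn a (m + 1) (Matrix.vecCons a c) := by
  obtain rfl := hc.zero
  exact
    { zero := rfl
      last := hc.last
      strictMono := hc.strictMono.vecCons hae
      homog := Fin.forall_fin_succ.2 ⟨he.prop, hc.homog⟩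
      maximal := Fin.forall_fin_succ.2 ⟨fun _ => he.not_prop_of_gt, hc.maximal⟩ }

theorem exists_isGreedyPartitionFrom (hk : 1 ≤ k) (sgn : Finset (Fin n) → Bool) (a : Fin n) :
    ∃ (m : ℕ) (c : Fin (m + 1) → Fin n), IsGreedyPartitionFrom k sgn a m c := by
  induction a using WellFoundedGT.induction with
  | _ a ih =>
    by_cases hlast : (a : ℕ) = n - 1
    · exact ⟨0, fun _ => a, rfl, hlast, Fin.strictMono_iff_lt_succ.2 nofun, nofun, nofun⟩
    · have hnext : (a : ℕ) + 1 < n := by omega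
      obtain ⟨e, hle, he⟩ := (Set.toFinite {e | IntervalHomog k sgn a e}).exists_le_maximal
        (intervalHomog_of_le_add_one hk sgn (b := ⟨a + 1, hnext⟩) le_rfl)
      have hae : a < e := Nat.lt_of_succ_le hle
      obtain ⟨m, c, hc⟩ := ih e hae
      exact ⟨m + 1, _, hc.vecCons hae he⟩

theorem exists_isGreedyPartition (hk : 1 ≤ k) (sgn : Finset (Fin (n + 1)) → Bool) :
    ∃ (m : ℕ) (c : Fin (m + 1) → Fin (n + 1)), IsGreedyPartition k sgn m c := by
  obtain ⟨m, c, hc⟩ := exists_isGreedyPartitionFrom hk sgn 0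
  exact ⟨m, c, congrArg Fin.val hc.zero, hc.last, hc.strictMono, hc.homog, hc.maximal⟩

end GreedyPartition

namespace FlipSeq

section Shift

variable {n k : ℕ} {sgn : Finset (Fin n) → Bool} {S : Finset (Fin n)} {x : Fin n} {σ : Bool}

theorem sign_exchange_ne (hF : FlipSeq k sgn) (hx : ∀ i ∈ S, x < i)
    (hσ : ∀ B ⊆ S, B.card = k → sgn (insert x B) = σ)
    {T : Finset (Fin n)} (hTS : T ⊆ S) (hT : T.card = k + 1) {a b : Fin n}
    (ha : a ∈ T) (hb : b ∉ T) (hab : a < b) (hne : sgn T ≠ σ) :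
    sgn (insert b (T.erase a)) ≠ σ := by
  have hcard : (T.erase a).card = k := by rw [Finset.card_erase_of_mem ha, hT, Nat.add_sub_cancel]
  have hsub : T.erase a ⊆ S := (T.erase_subset a).trans hTS
  intro hb_sign
  refine hF (T.erase a) hcard ⟨x, a, b, hx a (hTS ha), hab, fun h => (hx x (hsub h)).false,
    T.notMem_erase a, fun h => hb (Finset.mem_of_mem_erase h), ?_, ?_⟩
  · rw [hσ _ hsub hcard, Finset.insert_erase ha]
    exact hne.symm
  · rwa [hb_sign, Finset.insert_erase ha]

theorem sign_shift_ne (hF : FlipSeq k sgn) (hx : ∀ i ∈ S, x < i)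
    (hσ : ∀ B ⊆ S, B.card = k → sgn (insert x B) = σ)
    {T U : Finset (Fin n)} (hTS : T ⊆ S) (hUS : U ⊆ S) (hT : T.card = k + 1)
    (hU : U.card = k + 1) (hTU : ∀ a ∈ T \ U, ∀ b ∈ U \ T, a < b) (hne : sgn T ≠ σ) :
    sgn U ≠ σ := by
  induction hr : (T \ U).card generalizing T with
  | zero =>
    have hsub : T ⊆ U := Finset.sdiff_eq_empty_iff_subset.1 (Finset.card_eq_zero.1 hr)
    rwa [← Finset.eq_of_subset_of_card_le hsub (hU.trans hT.symm).le]
  | succ r ih =>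
    have hr' : (U \ T).card = r + 1 := (Finset.card_sdiff_comm (hU.trans hT.symm)).trans hr
    obtain ⟨a, ha⟩ : (T \ U).Nonempty := Finset.card_pos.1 (by omega)
    obtain ⟨b, hb⟩ : (U \ T).Nonempty := Finset.card_pos.1 (by omega)
    obtain ⟨haT, haU⟩ := Finset.mem_sdiff.1 ha
    obtain ⟨hbU, hbT⟩ := Finset.mem_sdiff.1 hb
    have hsdiff : insert b (T.erase a) \ U = (T \ U).erase a := by
      rw [Finset.insert_sdiff_of_mem _ hbU, Finset.erase_sdiff_comm]
    have hsdiff' : U \ insert b (T.erase a) ⊆ U \ T := by grind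
    refine ih (T := insert b (T.erase a)) ?_ ?_ ?_
      (hF.sign_exchange_ne hx hσ hTS hT haT hbT (hTU a ha b hb) hne) ?_
    · exact Finset.insert_subset (hUS hbU) ((T.erase_subset a).trans hTS)
    · rw [Finset.card_insert_of_notMem fun h => hbT (Finset.mem_of_mem_erase h),
        Finset.card_erase_add_one haT, hT]
    · intro u hu v hv
      rw [hsdiff] at hu
      exact hTU u (Finset.mem_of_mem_erase hu) v (hsdiff' hv)
    · rw [hsdiff, Finset.card_erase_of_mem ha, hr, Nat.add_sub_cancel]

theorem sign_ne_of_overlap (hF : FlipSeq k sgn) (hk : 1 ≤ k) (hx : ∀ i ∈ S, x < i)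
    (hσ : ∀ B ⊆ S, B.card = k → sgn (insert x B) = σ)
    {T U : Finset (Fin n)} (hTS : T ⊆ S) (hUS : U ⊆ S) (hT : T.card = k + 1)
    (hU : U.card = k + 1) {b b' : Fin n} (hbS : b ∈ S) (hbb' : (b' : ℕ) = b + 1)
    (hTb : ∀ i ∈ T, i ≤ b') (hUb : ∀ i ∈ U, b ≤ i) (hne : sgn T ≠ σ) : sgn U ≠ σ := by
  -- Some element of `T \ U` might equal `b + 1` and could not move left to `b ∈ U \ T`, so first
  -- bring `b` into `T`.
  wlog hbT : b ∈ T generalizing T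
  · obtain ⟨a, haT, hab'⟩ := Finset.exists_mem_ne (show 1 < T.card by omega) b'
    have hab : a < b := by
      have := hTb a haT
      have : a ≠ b := ne_of_mem_of_not_mem haT hbT
      omega
    refine this (T := insert b (T.erase a)) ?_ ?_ ?_
      (hF.sign_exchange_ne hx hσ hTS hT haT hbT hab hne) (Finset.mem_insert_self _ _)
    · exact Finset.insert_subset hbS ((T.erase_subset a).trans hTS)
    · rw [Finset.card_insert_of_notMem fun h => hbT (Finset.mem_of_mem_erase h),
        Finset.card_erase_add_one haT, hT]
    · have hbb'_le : b ≤ b' := by omega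
      exact Finset.forall_mem_insert _ _ _ |>.2
        ⟨hbb'_le, fun i hi => hTb i (Finset.mem_of_mem_erase hi)⟩
  refine hF.sign_shift_ne hx hσ hTS hUS hT hU (fun a ha v hv => ?_) hne
  have haT : a ∈ T := (Finset.mem_sdiff.1 ha).1
  obtain ⟨hvU, hvT⟩ := Finset.mem_sdiff.1 hv
  have hab' : a ≤ b' := hTb a haT
  have hbv : b ≤ v := hUb v hvU
  have hvb : v ≠ b := (ne_of_mem_of_not_mem hbT hvT).symm
  have hav : a ≠ v := ne_of_mem_of_not_mem haT hvT
  omega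

end Shift

end FlipSeq

section FirstLink

variable {N k m m' : ℕ} {sgn : Finset (Fin (N + 1)) → Bool}

/-- The link of the first element: the signs of the sets containing `0`, indexed by the remaining
elements, so that the index `i` of the link stands for the element `i.succ`. -/
def firstLink (sgn : Finset (Fin (N + 1)) → Bool) : Finset (Fin N) → Bool :=
  fun B => sgn (insert 0 (B.map (Fin.succEmb N)))

theorem FlipSeq.flipSeq_firstLink (hF : FlipSeq (k + 1) sgn) : FlipSeq k (firstLink sgn) := by
  rintro A hA ⟨i, j, l, hij, hjl, hi, hj, hl, hsgn_ij, hsgn_jl⟩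
  have hcard : (insert 0 (A.map (Fin.succEmb N))).card = k + 1 := by
    rw [Finset.card_insert_of_notMem (by simp [Fin.succ_ne_zero]), Finset.card_map, hA]
  have hmem (i : Fin N) (hi : i ∉ A) : i.succ ∉ insert 0 (A.map (Fin.succEmb N)) := by
    simp [Fin.succ_ne_zero, hi]
  have hinsert (i : Fin N) :
      firstLink sgn (insert i A) = sgn (insert i.succ (insert 0 (A.map (Fin.succEmb N)))) := by
    rw [firstLink, Finset.map_insert, Finset.insert_comm, Fin.coe_succEmb]
  rw [hinsert, hinsert] at hsgn_ij hsgn_jl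
  exact hF _ hcard ⟨i.succ, j.succ, l.succ, Fin.succ_lt_succ_iff.2 hij, Fin.succ_lt_succ_iff.2 hjl,
    hmem i hi, hmem j hj, hmem l hl, hsgn_ij, hsgn_jl⟩

theorem IntervalHomog.exists_sign_insert_zero {p q : Fin N}
    (h : IntervalHomog k (firstLink sgn) p q) :
    ∃ σ, ∀ B ⊆ Finset.Icc p.succ q.succ, B.card = k + 1 → sgn (insert 0 B) = σ := by
  obtain ⟨σ, hσ⟩ := intervalHomog_iff.1 h
  refine ⟨σ, fun B hB hcard => ?_⟩
  rw [← Fin.map_succEmb_Icc, Finset.subset_map_iff] at hB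
  obtain ⟨B', hB', rfl⟩ := hB
  exact hσ B' hB' (by rwa [Finset.card_map] at hcard)

theorem FlipSeq.not_intervalHomog_firstLink (hF : FlipSeq (k + 1) sgn) {p b q : Fin N}
    (hleft : ¬ IntervalHomog (k + 1) sgn p.succ b.succ)
    (hright : ¬ IntervalHomog (k + 1) sgn b.castSucc q.succ) :
    ¬ IntervalHomog k (firstLink sgn) p q := by
  intro hlink
  obtain ⟨σ, hσ⟩ := hlink.exists_sign_insert_zero
  have hpb : p.succ ≤ b.castSucc := by
    have := add_one_lt_of_not_intervalHomog (Nat.le_add_left 1 k) hleft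
    simp only [Fin.val_succ] at this
    simp only [Fin.le_def, Fin.val_succ, Fin.val_castSucc]
    omega
  have hbq : b.succ ≤ q.succ := by
    have := add_one_lt_of_not_intervalHomog (Nat.le_add_left 1 k) hright
    exact this.le
  obtain ⟨T, hT, hTcard, hTσ⟩ := exists_sign_ne_of_not_intervalHomog hleft σ
  obtain ⟨U, hU, hUcard, hUσ⟩ := exists_sign_ne_of_not_intervalHomog hright (!σ)
  refine absurd (Bool.eq_not_of_ne ?_) hUσ
  exact hF.sign_ne_of_overlap (Nat.le_add_left 1 k)
    (fun i hi => (Fin.succ_pos p).trans_le (Finset.mem_Icc.1 hi).1) hσ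
    (hT.trans (Finset.Icc_subset_Icc_right hbq)) (hU.trans (Finset.Icc_subset_Icc_left hpb))
    hTcard hUcard (Finset.mem_Icc.2 ⟨hpb, b.castSucc_lt_succ.le.trans hbq⟩) rfl
    (fun i hi => (Finset.mem_Icc.1 (hT hi)).2) (fun i hi => (Finset.mem_Icc.1 (hU hi)).1) hTσ

theorem IsGreedyPartition.succ_le_of_firstLink {c : Fin (m + 1) → Fin (N + 1)}
    (hF : FlipSeq (k + 1) sgn) (hc : IsGreedyPartition (k + 1) sgn m c) {p q : Fin N}
    (hlink : IntervalHomog k (firstLink sgn) p q) {j : ℕ} (hj : j + 2 < m + 1)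
    (hp : p.succ ≤ c ⟨j, by omega⟩) : q.succ ≤ c ⟨j + 2, hj⟩ := by
  obtain ⟨-, -, hmono, -, hmax⟩ := hc
  have hlt : c ⟨j + 1, by omega⟩ < c ⟨j + 2, hj⟩ := hmono (Fin.mk_lt_mk.2 (Nat.lt_succ_self _))
  obtain ⟨b, hb⟩ := Fin.exists_castSucc_eq.2 (Fin.ne_last_of_lt hlt)
  by_contra! hq
  refine hF.not_intervalHomog_firstLink (b := b) (fun h => ?_) ?_ hlink
  · have hbc : c ⟨j + 1, by omega⟩ < b.succ := hb ▸ b.castSucc_lt_succ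
    exact hmax ⟨j, by omega⟩ b.succ hbc (h.mono hp le_rfl)
  · rw [hb]
    exact hmax ⟨j + 1, by omega⟩ q.succ hq

theorem IsGreedyPartition.le_two_mul_add_one_of_firstLink {c : Fin (m + 1) → Fin (N + 1)}
    {d : Fin (m' + 1) → Fin N} (hF : FlipSeq (k + 1) sgn)
    (hc : IsGreedyPartition (k + 1) sgn m c) (hd : IsGreedyPartition k (firstLink sgn) m' d) :
    m ≤ 2 * m' + 1 := by
  by_contra! hlt
  obtain ⟨hd_zero, hd_last, -, hd_homog, -⟩ := hd
  have hc_mono : StrictMono c := hc.2.2.1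
  have hcut (i : Fin (m' + 1)) : (d i).succ ≤ c ⟨2 * i + 1, by omega⟩ := by
    induction i using Fin.induction with
    | zero =>
      have hpos : c 0 < c ⟨1, by omega⟩ := hc_mono (Fin.mk_lt_mk.2 one_pos)
      change (d 0 : ℕ) + 1 ≤ c ⟨1, _⟩
      omega
    | succ i ih => exact hc.succ_le_of_firstLink hF (hd_homog i) (j := 2 * i + 1) (by omega) ih
  have hlast : (d (Fin.last m') : ℕ) + 1 ≤ c ⟨2 * m' + 1, by omega⟩ := hcut (Fin.last m')
  have hinner : c ⟨2 * m' + 1, by omega⟩ < c (Fin.last m) := hc_mono (Fin.mk_lt_mk.2 hlt)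
  omega

end FirstLink

theorem flip_sequence_inductive_step_general {k c : ℕ} (hk : 2 ≤ k)
    (hbound : ∀ (n m : ℕ) (sgn : Finset (Fin n) → Bool) (d : Fin (m + 1) → Fin n),
      FlipSeq (k - 1) sgn → IsGreedyPartition (k - 1) sgn m d → m ≤ c)
    {n m : ℕ} {sgn : Finset (Fin n) → Bool} {d : Fin (m + 1) → Fin n}
    (hF : FlipSeq k sgn) (hd : IsGreedyPartition k sgn m d) : m ≤ 2 * c + 1 := by
  obtain ⟨k, rfl⟩ : ∃ l, k = l + 1 := ⟨k - 1, by omega⟩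
  rw [Nat.add_sub_cancel] at hbound
  have hmn : m + 1 ≤ n := by simpa using Fintype.card_le_of_injective d hd.2.2.1.injective
  match n with
  | 0 | 1 => omega
  | N + 2 =>
    obtain ⟨m', e, he⟩ := exists_isGreedyPartition (Nat.le_of_succ_le_succ hk) (firstLink sgn)
    have hm' : m' ≤ c := hbound _ _ _ e hF.flipSeq_firstLink he
    have hm : m ≤ 2 * m' + 1 := hd.le_two_mul_add_one_of_firstLink hF he
    omega

/-- Inductive step: if `k ≥ 2` and `c ≥ 1` is such that the greedy
partition of every flip `(k-1)`-sequence has at most `c` blocks, then the greedy partition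
of every flip `k`-sequence has at most `1 + (4k+10)c/k` blocks. -/
theorem flip_sequence_inductive_step :
    ∀ (k c : ℕ), 2 ≤ k → 1 ≤ c →
      (∀ (n m : ℕ) (sgn : Finset (Fin n) → Bool) (cc : Fin (m + 1) → Fin n),
        FlipSeq (k - 1) sgn → IsGreedyPartition (k - 1) sgn m cc → m ≤ c) →
      ∀ (n m : ℕ) (sgn : Finset (Fin n) → Bool) (cc : Fin (m + 1) → Fin n),
        FlipSeq k sgn → IsGreedyPartition k sgn m cc →
        (m : ℝ) ≤ 1 + (4 * (k : ℝ) + 10) * (c : ℝ) / (k : ℝ) := by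
  intro k c hk _ hbound n m sgn cc hF hcc
  have hm : (m : ℝ) ≤ 2 * c + 1 := mod_cast flip_sequence_inductive_step_general hk hbound hF hcc
  have hk0 : (0 : ℝ) < k := by positivity
  have hslack : (2 : ℝ) * c ≤ (4 * k + 10) * c / k := by
    rw [le_div_iff₀ hk0]
    nlinarith [mul_nonneg (Nat.cast_nonneg (α := ℝ) c) hk0.le, Nat.cast_nonneg (α := ℝ) c]
  linarith
end

section
/- For every d ≥ 2 there exists a constant c > 0 such that OT_d(n) ≥ COT_d(⌈c·n⌉) for all n; that is, every sequence of OT_d(n) points in super-general position in R^d contains a super-order-type homogeneous subsequence of length at least ⌈c·n⌉. -/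
open Set

/-!
Let `q` be an order-type homogeneous sequence in `ℝ^(d+1)` whose projection `p` to `ℝ^d` is in
general position. For a `d`-set `A` and indices `i < j < l` outside `A`, the Grassmann–Plücker
relation `p(iA) q(jlA) - p(jA) q(ilA) + p(lA) q(ijA) = 0` between determinants, in which the three
`q`-factors have the same sign, shows that the signs of `p(iA)`, `p(jA)`, `p(lA)` do not alternate:
the sign sequence of `p` is a flip sequence. By Ramsey's theorem, boundedly many points at mutual
distance `s` in a flip sequence contain a large homogeneous set, and the flip property spreads its
sign over the gap in its middle, so a fixed fraction of `p` is order-type homogeneous. Descending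
through the dimensions, an order-type homogeneous sequence in super-general position loses only a
constant factor until it is super-order-type homogeneous.
-/

open scoped Finset

section Ramsey

universe u v

/-- `N` is an upper bound for the Ramsey number of `r`-element sets, colour set `κ` and target
size `s`: colouring the finite subsets of any set with at least `N` points, there are `s` points
all of whose `r`-element subsets have the same colour. -/
def IsRamseyBound (κ : Type v) (r s N : ℕ) : Prop :=
  ∀ {ι : Type u} (V : Finset ι), N ≤ #V → ∀ c : Finset ι → κ,
    ∃ R ⊆ V, #R = s ∧ ∃ b, ∀ S ⊆ R, #S = r → c S = b

theorem exists_forall_color_eq_color_of_mem {κ : Type v} {r : ℕ}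
    (hr : ∀ s, ∃ N, IsRamseyBound.{u} κ r s N) (s : ℕ) :
    ∃ N, ∀ {ι : Type u} (V : Finset ι), N ≤ #V → ∀ c : Finset ι → κ,
      ∃ R ⊆ V, #R = s ∧ ∃ b : ι → κ, ∀ S ⊆ R, #S = r + 1 → ∃ x ∈ S, c S = b x := by
  classical
  induction s with
  | zero =>
    refine ⟨0, fun V _ c => ⟨∅, V.empty_subset, rfl, fun _ => c ∅, fun S hS hcard => ?_⟩⟩
    simp [Finset.subset_empty.mp hS] at hcard
  | succ s ih =>
    obtain ⟨M, hM⟩ := ih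
    obtain ⟨N, hN⟩ := hr M
    refine ⟨N + 1, fun {ι} V hV c => ?_⟩
    obtain ⟨x, hx⟩ : V.Nonempty := Finset.card_pos.mp (by omega)
    -- All `(r + 1)`-subsets of `insert x R₁` through `x` have colour `bx`.
    obtain ⟨R₁, hR₁, hcard₁, bx, hbx⟩ :=
      hN (V.erase x) (by rw [Finset.card_erase_of_mem hx]; omega) fun S => c (insert x S)
    obtain ⟨R₂, hR₂, hcard₂, b, hb⟩ := hM R₁ hcard₁.ge c
    have hxR₂ : x ∉ R₂ := fun h => Finset.notMem_erase x V (hR₁ (hR₂ h))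
    refine ⟨insert x R₂, ?_, by rw [Finset.card_insert_of_notMem hxR₂, hcard₂],
      Function.update b x bx, fun S hS hcard => ?_⟩
    · exact Finset.insert_subset hx (hR₂.trans (hR₁.trans (V.erase_subset x)))
    by_cases hxS : x ∈ S
    · refine ⟨x, hxS, ?_⟩
      have := hbx (S.erase x) ((Finset.subset_insert_iff.mp hS).trans hR₂)
        (by rw [Finset.card_erase_of_mem hxS, hcard, Nat.add_sub_cancel])
      rwa [Finset.insert_erase hxS, ← Function.update_self x bx b] at this
    · obtain ⟨y, hy, hcy⟩ := hb S ((Finset.subset_insert_iff_of_notMem hxS).mp hS) hcard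
      exact ⟨y, hy, by rwa [Function.update_of_ne (ne_of_mem_of_not_mem hy hxS)]⟩

theorem exists_isRamseyBound (κ : Type v) [Finite κ] (r s : ℕ) :
    ∃ N, IsRamseyBound.{u} κ r s N := by
  classical
  have := Fintype.ofFinite κ
  induction r generalizing s with
  | zero =>
    refine ⟨s, fun V hV c => ?_⟩
    obtain ⟨R, hR, hcard⟩ := Finset.exists_subset_card_eq hV
    exact ⟨R, hR, hcard, c ∅, fun S _ hS => by rw [Finset.card_eq_zero.mp hS]⟩
  | succ r ih =>
    obtain ⟨N, hN⟩ := exists_forall_color_eq_color_of_mem ih (Fintype.card κ * s)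
    refine ⟨N, fun V hV c => ?_⟩
    obtain ⟨R, hR, hcard, b, hb⟩ := hN V hV c
    obtain ⟨k, -, hk⟩ : ∃ k ∈ (Finset.univ : Finset κ), s ≤ #{x ∈ R | b x = k} :=
      Finset.exists_le_card_fiber_of_mul_le_card_of_maps_to (fun _ _ => Finset.mem_univ _)
        ⟨c ∅, Finset.mem_univ _⟩ hcard.ge
    obtain ⟨R', hR', hcard'⟩ := Finset.exists_subset_card_eq hk
    refine ⟨R', (hR'.trans (Finset.filter_subset _ R)).trans hR, hcard', k, fun S hS hSr => ?_⟩
    obtain ⟨x, hx, hcx⟩ := hb S ((hS.trans hR').trans (Finset.filter_subset _ R)) hSr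
    exact hcx.trans (Finset.mem_filter.mp (hR' (hS hx))).2

theorem exists_orderEmbedding_forall_color_eq (κ : Type v) [Finite κ] (r s : ℕ) :
    ∃ N, ∀ c : Finset (Fin N) → κ, ∃ (e : Fin s ↪o Fin N) (b : κ),
      ∀ S : Finset (Fin s), #S = r → c (S.map e.toEmbedding) = b := by
  obtain ⟨N, hN⟩ := exists_isRamseyBound κ r s
  refine ⟨N, fun c => ?_⟩
  obtain ⟨R, -, hcard, b, hb⟩ := hN Finset.univ (Finset.card_fin N).ge c
  refine ⟨R.orderEmbOfFin hcard, b, fun S hS => hb _ ?_ (by rwa [Finset.card_map])⟩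
  exact (Finset.map_subset_map.mpr S.subset_univ).trans (R.map_orderEmbOfFin_univ hcard).subset

end Ramsey

namespace FlipSeq

variable {n k : ℕ} {sgn : Finset (Fin n) → Bool}

/-- Each element `x` of `S` in the gap between `L` and `R` can be exchanged for one in `L` and for
one in `R`; if both exchanged sets have sign `b`, the flip property forces `S` to have sign `b`. -/
theorem sgn_eq_of_between (h : FlipSeq k sgn) {L R : Finset (Fin n)} {b : Bool}
    (hL : k < #L) (hR : k < #R) (hLR : ∀ S ⊆ L ∪ R, #S = k + 1 → sgn S = b)
    {S : Finset (Fin n)} (hS : #S = k + 1)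
    (hgap : ∀ x ∈ S, x ∈ L ∪ R ∨ (∀ l ∈ L, l < x) ∧ ∀ r ∈ R, x < r) : sgn S = b := by
  induction hm : #(S \ (L ∪ R)) generalizing S with
  | zero => exact hLR S (Finset.sdiff_eq_empty_iff_subset.mp (Finset.card_eq_zero.mp hm)) hS
  | succ m ih =>
    obtain ⟨x, hx⟩ : (S \ (L ∪ R)).Nonempty := Finset.card_pos.mp (by omega)
    obtain ⟨hxS, hxLR⟩ := Finset.mem_sdiff.mp hx
    have hA : #(S.erase x) = k := by rw [Finset.card_erase_of_mem hxS, hS, Nat.add_sub_cancel]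
    obtain ⟨l, hlL, hlA⟩ := Finset.exists_mem_notMem_of_card_lt_card (hA.trans_lt hL)
    obtain ⟨r, hrR, hrA⟩ := Finset.exists_mem_notMem_of_card_lt_card (hA.trans_lt hR)
    have hxgap := (hgap x hxS).resolve_left hxLR
    have exchange : ∀ y ∈ L ∪ R, y ∉ S.erase x → sgn (insert y (S.erase x)) = b := by
      intro y hy hyA
      refine ih (by rw [Finset.card_insert_of_notMem hyA, hA]) ?_ ?_
      · exact Finset.forall_mem_insert _ _ _ |>.mpr
          ⟨Or.inl hy, fun z hz => hgap z (Finset.mem_of_mem_erase hz)⟩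
      · rw [Finset.insert_sdiff_of_mem _ hy, Finset.erase_sdiff_comm, Finset.card_erase_of_mem hx,
          hm, Nat.add_sub_cancel]
    have hl := exchange l (Finset.mem_union_left R hlL) hlA
    have hr := exchange r (Finset.mem_union_right L hrR) hrA
    by_contra hne
    refine h (S.erase x) hA ⟨l, x, r, hxgap.1 l hlL, hxgap.2 r hrR, hlA, S.notMem_erase x, hrA, ?_⟩
    rw [Finset.insert_erase hxS, hl, hr]
    exact ⟨Ne.symm hne, hne⟩

theorem intervalHomog_of_orderEmbedding (h : FlipSeq k sgn) (e : Fin (k + 1 + (k + 1)) ↪o Fin n)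
    {b : Bool} (he : ∀ S, #S = k + 1 → sgn (S.map e.toEmbedding) = b) :
    IntervalHomog k sgn (e (Fin.castAdd (k + 1) (Fin.last k))) (e (Fin.natAdd (k + 1) 0)) := by
  set eL : Fin (k + 1) ↪o Fin n := (Fin.castAddOrderEmb (k + 1)).trans e
  set eR : Fin (k + 1) ↪o Fin n := (Fin.natAddOrderEmb (k + 1)).trans e
  have map_univ_subset : ∀ f : Fin (k + 1) ↪o Fin (k + 1 + (k + 1)),
      Finset.univ.map (f.trans e).toEmbedding ⊆ Finset.univ.map e.toEmbedding := by
    intro f x hx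
    obtain ⟨i, -, rfl⟩ := Finset.mem_map.mp hx
    exact Finset.mem_map_of_mem e.toEmbedding (Finset.mem_univ (f i))
  have hunion := Finset.union_subset (map_univ_subset (Fin.castAddOrderEmb (k + 1)))
    (map_univ_subset (Fin.natAddOrderEmb (k + 1)))
  refine ⟨b, fun S hS hab => h.sgn_eq_of_between (L := Finset.univ.map eL.toEmbedding)
    (R := Finset.univ.map eR.toEmbedding) (by simp) (by simp) (fun T hT hTk => ?_) hS
    fun x hx => ?_⟩
  · obtain ⟨U, -, rfl⟩ := Finset.subset_map_iff.mp (hT.trans hunion)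
    exact he U (by rwa [Finset.card_map] at hTk)
  · obtain ⟨hax, hxb⟩ := hab x hx
    rcases hax.eq_or_lt with rfl | hax
    · exact Or.inl (Finset.mem_union_left _ (Finset.mem_map_of_mem eL.toEmbedding
        (Finset.mem_univ (Fin.last k))))
    rcases hxb.eq_or_lt with rfl | hxb
    · exact Or.inl (Finset.mem_union_right _ (Finset.mem_map_of_mem eR.toEmbedding
        (Finset.mem_univ 0)))
    simp only [Finset.mem_map, Finset.mem_univ, true_and, forall_exists_index,
      forall_apply_eq_imp_iff]
    exact Or.inr ⟨fun i => (eL.monotone (Fin.le_last i)).trans_lt hax,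
      fun i => hxb.trans_le (eR.monotone (Fin.zero_le i))⟩

/-- Apply Ramsey's theorem to points at mutual distance at least `s`: the flip property then fills
the gap between the two middle points of the monochromatic set. -/
theorem exists_intervalHomog (k : ℕ) : ∃ C : ℕ, ∀ {n s : ℕ} {sgn : Finset (Fin n) → Bool},
    FlipSeq k sgn → C * s < n → ∃ a b : Fin n, (b : ℕ) = a + s ∧ IntervalHomog k sgn a b := by
  obtain ⟨N, hN⟩ := exists_orderEmbedding_forall_color_eq Bool (k + 1) (k + 1 + (k + 1))
  refine ⟨N, fun {n s sgn} h hn => ?_⟩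
  rcases Nat.eq_zero_or_pos s with rfl | hs
  · refine ⟨⟨0, by omega⟩, ⟨0, by omega⟩, rfl, sgn {⟨0, by omega⟩}, fun S hS hS0 => ?_⟩
    congr
    exact Finset.eq_singleton_iff_nonempty_unique_mem.mpr
      ⟨Finset.card_pos.mp (by omega), fun x hx => le_antisymm (hS0 x hx).2 (hS0 x hx).1⟩
  let rep : Fin N ↪o Fin n := OrderEmbedding.ofStrictMono
    (fun i => ⟨i * s, (Nat.mul_le_mul_right s i.2.le).trans_lt hn⟩)
    fun i j hij => Fin.mk_lt_mk.mpr (Nat.mul_lt_mul_of_pos_right hij hs)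
  have rep_add_le : ∀ {i j}, i < j → (rep i : ℕ) + s ≤ rep j := fun {i j} hij =>
    (Nat.succ_mul i s).ge.trans (Nat.mul_le_mul_right s hij)
  obtain ⟨e, b, he⟩ := hN fun S => sgn (S.map rep.toEmbedding)
  have hmid : Fin.castAdd (k + 1) (Fin.last k) < Fin.natAdd (k + 1) 0 :=
    Fin.mk_lt_mk.mpr (Nat.lt_succ_self k)
  have hspace := rep_add_le (e.strictMono hmid)
  obtain ⟨b', hb'⟩ := h.intervalHomog_of_orderEmbedding (e.trans rep) (b := b) fun S hS =>
    (congrArg sgn (S.map_map e.toEmbedding rep.toEmbedding).symm).trans (he S hS)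
  refine ⟨rep (e (Fin.castAdd _ (Fin.last k))), ⟨_, hspace.trans_lt (Fin.is_lt _)⟩, rfl, b',
    fun S hS hab => hb' S hS fun x hx => ⟨(hab x hx).1, (hab x hx).2.trans ?_⟩⟩
  exact Fin.mk_le_of_le_val hspace

end FlipSeq

section ThreeTermRelation

open Matrix (vecCons)

variable {K V N : Type*} [Field K] [AddCommGroup V] [Module K V] [AddCommGroup N] [Module K N]
  {k : ℕ}

/-- A degenerate Grassmann–Plücker relation: `(-1)ⁱ • g (vᵢ, a) • D (v without vᵢ)`, summed over the
entries `vᵢ` of `v = (x, y, z, a)`, is alternating in `v`, so it vanishes on this linearly dependent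
family, and its terms with `vᵢ` an entry of `a` are zero. -/
theorem grassmannPlucker_three_term [Module.Finite K V] (hV : Module.finrank K V < k + 3)
    (g : V [⋀^Fin (k + 1)]→ₗ[K] K) (D : V [⋀^Fin (k + 2)]→ₗ[K] N) (x y z : V) (a : Fin k → V) :
    g (vecCons x a) • D (vecCons y (vecCons z a)) - g (vecCons y a) • D (vecCons x (vecCons z a))
      + g (vecCons z a) • D (vecCons x (vecCons y a)) = 0 := by
  let φ : V →ₗ[K] K :=
    { toFun := fun u => g (vecCons u a)
      map_add' := g.map_vecCons_add a
      map_smul' := g.map_vecCons_smul a }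
  have φ_eq_zero : ∀ i, φ (a i) = 0 := fun i =>
    g.map_eq_zero_of_eq _ (i := 0) (j := i.succ) (by simp) (Fin.succ_ne_zero i).symm
  set v : Fin (k + 3) → V := vecCons x (vecCons y (vecCons z a))
  have hv : ¬ LinearIndependent K v := fun h =>
    (h.fintype_card_le_finrank.trans_lt hV).ne (Fintype.card_fin _)
  have hsum := AlternatingMap.alternatizeUncurryFin (φ.smulRight D) |>.map_linearDependent v hv
  have hx : Fin.removeNth 0 v = vecCons y (vecCons z a) := rfl
  have hy : (Fin.succ 0).removeNth v = vecCons x (vecCons z a) :=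
    funext (Fin.cases rfl fun _ => rfl)
  have hz : (Fin.succ (Fin.succ 0)).removeNth v = vecCons x (vecCons y a) :=
    funext (Fin.cases rfl (Fin.cases rfl fun _ => rfl))
  rw [AlternatingMap.alternatizeUncurryFin_apply, Fin.sum_univ_succ, Fin.sum_univ_succ,
    Fin.sum_univ_succ, hx, hy, hz, Finset.sum_eq_zero fun i _ => by simp [v, φ_eq_zero]] at hsum
  simp only [Fin.val_succ, Fin.val_zero] at hsum
  simpa [v, φ, sub_eq_add_neg, add_assoc] using hsum

end ThreeTermRelation

section SortedEval

variable {R M M' N ι κ : Type*} [CommRing R] [AddCommGroup M] [Module R M] [AddCommGroup M']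
  [Module R M'] [AddCommGroup N] [Module R N] [LinearOrder ι] [LinearOrder κ] {k : ℕ}

/-- The value of an alternating map in `k` arguments at the vectors indexed by a `k`-element set of
indices, taken in increasing order of the index (junk value `0` if the set does not have `k`
elements). -/
def sortedEval (g : M [⋀^Fin k]→ₗ[R] N) (v : ι → M) (S : Finset ι) : N :=
  if h : #S = k then g (v ∘ S.orderEmbOfFin h) else 0

theorem sortedEval_of_card_eq (g : M [⋀^Fin k]→ₗ[R] N) (v : ι → M) {S : Finset ι} (h : #S = k) :
    sortedEval g v S = g (v ∘ S.orderEmbOfFin h) :=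
  dif_pos h

theorem sortedEval_compLinearMap (g : M [⋀^Fin k]→ₗ[R] N) (f : M' →ₗ[R] M) (v : ι → M')
    (S : Finset ι) : sortedEval (g.compLinearMap f) v S = sortedEval g (f ∘ v) S :=
  rfl

theorem sortedEval_map (g : M [⋀^Fin k]→ₗ[R] N) (e : κ ↪o ι) (v : ι → M) (S : Finset κ) :
    sortedEval g v (S.map e.toEmbedding) = sortedEval g (v ∘ e) S := by
  by_cases h : #S = k
  · have hmap : #(S.map e.toEmbedding) = k := by rwa [Finset.card_map]
    have hemb : (S.map e.toEmbedding).orderEmbOfFin hmap = e ∘ S.orderEmbOfFin h :=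
      (Finset.orderEmbOfFin_unique hmap
        (fun i => Finset.mem_map_of_mem e.toEmbedding (S.orderEmbOfFin_mem h i))
        (e.strictMono.comp (S.orderEmbOfFin h).strictMono)).symm
    rw [sortedEval_of_card_eq g v hmap, sortedEval_of_card_eq g _ h, hemb, Function.comp_assoc]
  · rw [sortedEval, sortedEval, dif_neg h, dif_neg (by rwa [Finset.card_map])]

theorem exists_orderEmbOfFin_insert_eq_insertNth {A : Finset ι} {x : ι} (hA : #A = k)
    (h : #(insert x A) = k + 1) :
    ∃ p : Fin (k + 1), #{a ∈ A | a < x} = (p : ℕ) ∧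
      ⇑((insert x A).orderEmbOfFin h) = p.insertNth x (A.orderEmbOfFin hA) := by
  set e := (insert x A).orderEmbOfFin h
  obtain ⟨p, hp⟩ : x ∈ Set.range e := by
    rw [Finset.range_orderEmbOfFin]
    exact Finset.mem_insert_self x A
  have hrest : p.removeNth e = A.orderEmbOfFin hA := by
    refine Finset.orderEmbOfFin_unique hA (fun i => ?_)
      (e.strictMono.comp (Fin.strictMono_succAbove p))
    refine Finset.mem_of_mem_insert_of_ne ((insert x A).orderEmbOfFin_mem h _) fun hi => ?_
    exact Fin.succAbove_ne p i (e.injective (hi.trans hp.symm))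
  refine ⟨p, ?_, by rw [← hrest, ← hp, Fin.insertNth_self_removeNth]⟩
  have hfilter : {a ∈ A | a < x} = (Finset.Iio p).map e.toEmbedding := by
    calc {a ∈ A | a < x} = {a ∈ insert x A | a < x} := by
          rw [Finset.filter_insert, if_neg (lt_irrefl x)]
      _ = {a ∈ Finset.univ.map e.toEmbedding | a < x} := by rw [Finset.map_orderEmbOfFin_univ]
      _ = (Finset.Iio p).map e.toEmbedding := by
          rw [Finset.filter_map]
          congr 1
          ext i
          simp [← hp]
  rw [hfilter, Finset.card_map, Fin.card_Iio]

theorem sortedEval_insert (g : M [⋀^Fin (k + 1)]→ₗ[R] N) (v : ι → M) {A : Finset ι} {x : ι}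
    (hx : x ∉ A) :
    sortedEval g v (insert x A) =
      (-1) ^ #{a ∈ A | a < x} • sortedEval (g.curryLeft (v x)) v A := by
  by_cases hA : #A = k
  · have h : #(insert x A) = k + 1 := by rw [Finset.card_insert_of_notMem hx, hA]
    obtain ⟨p, hp, heq⟩ := exists_orderEmbOfFin_insert_eq_insertNth hA h
    rw [sortedEval_of_card_eq g v h, sortedEval_of_card_eq _ v hA, heq, hp,
      AlternatingMap.curryLeft_apply_apply, ← AlternatingMap.map_insertNth]
    congr 1
    ext i : 1
    refine p.succAboveCases ?_ (fun i => ?_) i <;> simp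
  · rw [sortedEval, sortedEval, dif_neg hA, smul_zero, dif_neg]
    rwa [Finset.card_insert_of_notMem hx, Nat.add_left_inj]

theorem sortedEval_insert_insert (g : M [⋀^Fin (k + 2)]→ₗ[R] N) (v : ι → M) {A : Finset ι}
    {x y : ι} (hx : x ∉ A) (hy : y ∉ A) (hxy : x < y) :
    sortedEval g v (insert x (insert y A)) = (-1) ^ #{a ∈ A | a < x} • (-1) ^ #{a ∈ A | a < y} •
      sortedEval ((g.curryLeft (v x)).curryLeft (v y)) v A := by
  have hx' : x ∉ insert y A := by simp [hxy.ne, hx]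
  rw [sortedEval_insert g v hx', sortedEval_insert _ v hy, Finset.filter_insert,
    if_neg hxy.not_gt]

theorem sortedEval_three_term {K V : Type*} [Field K] [AddCommGroup V] [Module K V]
    [Module.Finite K V] (hV : Module.finrank K V < k + 3) (g : V [⋀^Fin (k + 1)]→ₗ[K] K)
    (D : V [⋀^Fin (k + 2)]→ₗ[K] K) (v : ι → V) {A : Finset ι} (hA : #A = k) {i j l : ι}
    (hij : i < j) (hjl : j < l) (hi : i ∉ A) (hj : j ∉ A) (hl : l ∉ A) :
    sortedEval g v (insert i A) * sortedEval D v (insert j (insert l A))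
      - sortedEval g v (insert j A) * sortedEval D v (insert i (insert l A))
      + sortedEval g v (insert l A) * sortedEval D v (insert i (insert j A)) = 0 := by
  have relation := grassmannPlucker_three_term hV g D (v i) (v j) (v l) (v ∘ A.orderEmbOfFin hA)
  simp only [← AlternatingMap.curryLeft_apply_apply, ← sortedEval_of_card_eq _ v hA,
    smul_eq_mul] at relation
  rw [sortedEval_insert g v hi, sortedEval_insert g v hj, sortedEval_insert g v hl,
    sortedEval_insert_insert D v hj hl hjl, sortedEval_insert_insert D v hi hl (hij.trans hjl),
    sortedEval_insert_insert D v hi hj hij]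
  linear_combination (-1) ^ #{a ∈ A | a < i} * (-1) ^ #{a ∈ A | a < j} *
    (-1) ^ #{a ∈ A | a < l} * relation

end SortedEval

section Orientation

variable {m n d : ℕ}

/-- The homogeneous coordinates `(1, x)` of the point `x` of affine `d`-space. -/
def homogenize {R : Type*} [One R] (x : Fin d → R) : Fin (d + 1) → R :=
  Fin.cons 1 x

theorem homogenize_init {R : Type*} [Semiring R] (x : Fin (d + 1) → R) :
    homogenize (Fin.init x) = LinearMap.funLeft R R Fin.castSucc (homogenize x) :=
  funext (Fin.cases rfl fun _ => rfl)

theorem linearIndependent_homogenize {R ι : Type*} [Ring R] {p : ι → Fin d → R}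
    (hp : AffineIndependent R p) : LinearIndependent R fun i => homogenize (p i) := by
  rw [affineIndependent_iff] at hp
  refine linearIndependent_iff'.mpr fun s w hw => hp s w ?_ ?_
  · simpa [homogenize] using congrFun hw 0
  · exact funext fun j => by simpa [homogenize] using congrFun hw j.succ

/-- The determinant whose sign is the orientation of the `(d + 1)`-subset `S` of the index set of a
point sequence in `ℝ^d` (junk value `0` if `S` does not have `d + 1` elements). -/
noncomputable def orientationDet (p : Fin n → Fin d → ℝ) (S : Finset (Fin n)) : ℝ :=
  sortedEval Matrix.detRowAlternating (fun i => homogenize (p i)) S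

theorem orientationDet_map (p : Fin n → Fin d → ℝ) (e : Fin m ↪o Fin n) (S : Finset (Fin m)) :
    orientationDet p (S.map e.toEmbedding) = orientationDet (fun i => p (e i)) S :=
  sortedEval_map _ e _ S

theorem orientationDet_init (q : Fin n → Fin (d + 1) → ℝ) (S : Finset (Fin n)) :
    orientationDet (fun i => Fin.init (q i)) S =
      sortedEval (Matrix.detRowAlternating.compLinearMap (LinearMap.funLeft ℝ ℝ Fin.castSucc))
        (fun i => homogenize (q i)) S := by
  simp only [orientationDet, homogenize_init]
  exact (sortedEval_compLinearMap _ _ _ S).symm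

theorem otSign_orderEmbOfFin (p : Fin n → Fin d → ℝ) {S : Finset (Fin n)} (h : #S = d + 1) :
    otSign (fun j => p (S.orderEmbOfFin h j)) = Real.sign (orientationDet p S) := by
  rw [otSign, orientationDet, sortedEval_of_card_eq _ _ h, ← Matrix.det_transpose]
  rfl

theorem orderTypeHomogeneous_iff {p : Fin n → Fin d → ℝ} :
    OrderTypeHomogeneous p ↔
      ∃ σ, σ ≠ 0 ∧ ∀ S, #S = d + 1 → Real.sign (orientationDet p S) = σ := by
  refine exists_congr fun σ => and_congr_right fun _ => ⟨fun h S hS => ?_, fun h f hf => ?_⟩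
  · rw [← otSign_orderEmbOfFin p hS, h _ (S.orderEmbOfFin hS).strictMono]
  · have hcard : #(Finset.univ.map (OrderEmbedding.ofStrictMono f hf).toEmbedding) = d + 1 := by
      simp
    rw [← h _ hcard, ← otSign_orderEmbOfFin p hcard,
      ← Finset.orderEmbOfFin_unique hcard (f := f) (fun i => by simp) hf]

theorem OrderTypeHomogeneous.orientationDet_mul_pos {p : Fin n → Fin d → ℝ}
    (hp : OrderTypeHomogeneous p) {S T : Finset (Fin n)} (hS : #S = d + 1) (hT : #T = d + 1) :
    0 < orientationDet p S * orientationDet p T := by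
  obtain ⟨σ, hσ, h⟩ := orderTypeHomogeneous_iff.mp hp
  have hpos : ∀ U, #U = d + 1 → 0 < σ * orientationDet p U := fun U hU => by
    rw [← h U hU]
    exact Real.sign_mul_pos_of_ne_zero _ (mt Real.sign_eq_zero_iff.mpr ((h U hU).trans_ne hσ))
  refine pos_of_mul_pos_right (a := σ ^ 2) ?_ (sq_nonneg σ)
  linarith [mul_pos (hpos S hS) (hpos T hT)]

theorem OrderTypeHomogeneous.comp {p : Fin n → Fin d → ℝ} (hp : OrderTypeHomogeneous p)
    {f : Fin m → Fin n} (hf : StrictMono f) : OrderTypeHomogeneous fun i => p (f i) := by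
  obtain ⟨σ, hσ, h⟩ := hp
  exact ⟨σ, hσ, fun g hg => h (f ∘ g) (hf.comp hg)⟩

theorem GeneralPosition.comp {p : Fin n → Fin d → ℝ} (hp : GeneralPosition p)
    {f : Fin m → Fin n} (hf : Function.Injective f) : GeneralPosition fun i => p (f i) := by
  intro S hS
  have hmap := hp (S.map ⟨f, hf⟩) (by rwa [Finset.card_map])
  exact hmap.comp_embedding (Function.Embedding.subtypeMap ⟨f, hf⟩ fun _ => Finset.mem_map_of_mem _)

theorem GeneralPosition.orientationDet_ne_zero {p : Fin n → Fin d → ℝ} (hp : GeneralPosition p)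
    {S : Finset (Fin n)} (hS : #S = d + 1) : orientationDet p S ≠ 0 := by
  rw [orientationDet, sortedEval_of_card_eq _ _ hS]
  have hind := linearIndependent_homogenize
    ((hp S hS.le).comp_embedding (S.orderIsoOfFin hS).toEquiv.toEmbedding)
  exact ((Matrix.isUnit_iff_isUnit_det _).mp
    (Matrix.linearIndependent_rows_iff_isUnit.mp hind)).ne_zero

/-- The sign sequence of a point sequence in `ℝ^d`: positive orientation is encoded as `true`. -/
noncomputable def signSeq (p : Fin n → Fin d → ℝ) (S : Finset (Fin n)) : Bool :=
  decide (0 < orientationDet p S)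

theorem signSeq_map (p : Fin n → Fin d → ℝ) (e : Fin m ↪o Fin n) (S : Finset (Fin m)) :
    signSeq p (S.map e.toEmbedding) = signSeq (fun i => p (e i)) S := by
  rw [signSeq, signSeq, orientationDet_map]

theorem GeneralPosition.orientationDet_mul_neg {p : Fin n → Fin d → ℝ} (hp : GeneralPosition p)
    {S T : Finset (Fin n)} (hS : #S = d + 1) (hT : #T = d + 1) (hST : signSeq p S ≠ signSeq p T) :
    orientationDet p S * orientationDet p T < 0 := by
  have hne : ¬ (0 < orientationDet p S ↔ 0 < orientationDet p T) := by
    simpa only [signSeq, ne_eq, decide_eq_decide] using hST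
  refine mul_neg_iff.mpr ?_
  have hS0 := (hp.orientationDet_ne_zero hS).lt_or_gt
  have hT0 := (hp.orientationDet_ne_zero hT).lt_or_gt
  grind

theorem GeneralPosition.orderTypeHomogeneous {p : Fin n → Fin d → ℝ} (hp : GeneralPosition p)
    {b : Bool} (hb : ∀ S, #S = d + 1 → signSeq p S = b) : OrderTypeHomogeneous p := by
  refine orderTypeHomogeneous_iff.mpr ⟨cond b 1 (-1), by cases b <;> norm_num, fun S hS => ?_⟩
  rcases (hp.orientationDet_ne_zero hS).lt_or_gt with hneg | hpos
  · rw [← hb S hS, signSeq, decide_eq_false hneg.not_gt, cond_false, Real.sign_of_neg hneg]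
  · rw [← hb S hS, signSeq, decide_eq_true hpos, cond_true, Real.sign_of_pos hpos]

theorem sub_add_ne_zero_of_mul_neg {R : Type*} [CommRing R] [LinearOrder R]
    [IsStrictOrderedRing R] {x y z a b c : R} (hxy : x * y < 0) (hyz : y * z < 0) (hab : 0 < a * b)
    (hbc : 0 < b * c) : x * a - y * b + z * c ≠ 0 := by
  intro h
  have hsum : (x * y) * (a * b) + (y * z) * (b * c) = (y * b) ^ 2 := by
    linear_combination (y * b) * h
  linarith [mul_neg_of_neg_of_pos hxy hab, mul_neg_of_neg_of_pos hyz hbc, sq_nonneg (y * b)]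

theorem OrderTypeHomogeneous.flipSeq_signSeq_init {q : Fin n → Fin (d + 1) → ℝ}
    (hq : OrderTypeHomogeneous q) (hinit : GeneralPosition fun i => Fin.init (q i)) :
    FlipSeq d (signSeq fun i => Fin.init (q i)) := by
  rintro A hA ⟨i, j, l, hij, hjl, hi, hj, hl, hsij, hsjl⟩
  set p := fun i => Fin.init (q i)
  have card_insert : ∀ {x}, x ∉ A → #(insert x A) = d + 1 := fun hx => by
    rw [Finset.card_insert_of_notMem hx, hA]
  have card_insert_insert : ∀ {x y}, x < y → x ∉ A → y ∉ A → #(insert x (insert y A)) = d + 2 :=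
    fun hxy hx hy => by
      rw [Finset.card_insert_of_notMem (by simp [hxy.ne, hx]), card_insert hy]
  have hDil := card_insert_insert (hij.trans hjl) hi hl
  -- A `+ - +` or `- + -` pattern would make all summands of this relation agree in sign.
  have relation : orientationDet p (insert i A) * orientationDet q (insert j (insert l A))
      - orientationDet p (insert j A) * orientationDet q (insert i (insert l A))
      + orientationDet p (insert l A) * orientationDet q (insert i (insert j A)) = 0 := by
    simp only [p, orientationDet_init]
    exact sortedEval_three_term (by simp) _ _ _ hA hij hjl hi hj hl
  exact sub_add_ne_zero_of_mul_neg
    (hinit.orientationDet_mul_neg (card_insert hi) (card_insert hj) hsij)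
    (hinit.orientationDet_mul_neg (card_insert hj) (card_insert hl) hsjl)
    (hq.orientationDet_mul_pos (card_insert_insert hjl hj hl) hDil)
    (hq.orientationDet_mul_pos hDil (card_insert_insert hij hi hj)) relation

end Orientation

section Subsequences

variable {m n d : ℕ}

theorem OrderTypeHomogeneous.exists_orderEmbedding_init (d : ℕ) :
    ∃ C : ℕ, ∀ {n s : ℕ} {q : Fin n → Fin (d + 1) → ℝ}, OrderTypeHomogeneous q →
      (GeneralPosition fun i => Fin.init (q i)) → C * s < n →
        ∃ f : Fin (s + 1) ↪o Fin n, OrderTypeHomogeneous fun i => Fin.init (q (f i)) := by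
  obtain ⟨C, hC⟩ := FlipSeq.exists_intervalHomog d
  refine ⟨C, fun {n s q} hq hinit hn => ?_⟩
  obtain ⟨a, b, hb, σ, hσ⟩ := hC (hq.flipSeq_signSeq_init hinit) hn
  let f : Fin (s + 1) ↪o Fin n :=
    OrderEmbedding.ofStrictMono (fun i => ⟨a + i, by omega⟩) fun i j hij => by simpa using hij
  refine ⟨f, (hinit.comp f.injective).orderTypeHomogeneous (b := σ) fun S hS => ?_⟩
  rw [← signSeq_map (fun i => Fin.init (q i)) f]
  refine hσ _ (by rwa [Finset.card_map]) fun i hi => ?_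
  obtain ⟨j, -, rfl⟩ := Finset.mem_map.mp hi
  exact ⟨Fin.mk_le_mk.mpr (by omega), Fin.mk_le_mk.mpr (by omega)⟩

theorem SuperGeneralPosition.generalPosition {p : Fin n → Fin d → ℝ}
    (hp : SuperGeneralPosition p) : GeneralPosition p := by
  rcases Nat.eq_zero_or_pos d with rfl | hd
  · intro S hS
    have := Finset.card_le_one_iff_subsingleton_coe.mp hS
    exact affineIndependent_of_subsingleton ℝ _
  · exact hp d hd le_rfl

theorem SuperGeneralPosition.init {p : Fin n → Fin (d + 1) → ℝ} (hp : SuperGeneralPosition p) :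
    SuperGeneralPosition fun i => Fin.init (p i) :=
  fun k hk hkd => hp k hk (hkd.trans d.le_succ)

theorem SuperGeneralPosition.comp {p : Fin n → Fin d → ℝ} (hp : SuperGeneralPosition p)
    {f : Fin m → Fin n} (hf : Function.Injective f) : SuperGeneralPosition fun i => p (f i) :=
  fun k hk hkd => (hp k hk hkd).comp hf

theorem OrderTypeHomogeneous.superOrderTypeHomogeneous {p : Fin n → Fin (d + 1) → ℝ}
    (hp : OrderTypeHomogeneous p) (hinit : SuperOrderTypeHomogeneous fun i => Fin.init (p i)) :
    SuperOrderTypeHomogeneous p := by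
  intro k hk hkd
  rcases hkd.eq_or_lt with rfl | hlt
  · exact hp
  · exact hinit k hk (Nat.lt_succ_iff.mp hlt)

theorem OrderTypeHomogeneous.exists_superOrderTypeHomogeneous (d : ℕ) :
    ∃ C : ℕ, ∀ {n s : ℕ} {q : Fin n → Fin d → ℝ}, OrderTypeHomogeneous q →
      SuperGeneralPosition q → C * s < n →
        ∃ f : Fin (s + 1) ↪o Fin n, SuperOrderTypeHomogeneous fun i => q (f i) := by
  induction d with
  | zero =>
    refine ⟨1, fun _ _ hn => ⟨Fin.castLEOrderEmb (by omega), fun k hk hk0 => ?_⟩⟩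
    omega
  | succ d ih =>
    obtain ⟨C₁, hC₁⟩ := OrderTypeHomogeneous.exists_orderEmbedding_init d
    obtain ⟨C₂, hC₂⟩ := ih
    refine ⟨C₁ * C₂, fun {n s q} hq hgp hn => ?_⟩
    obtain ⟨f, hf⟩ := hC₁ (s := C₂ * s) hq hgp.init.generalPosition (by rwa [← mul_assoc])
    obtain ⟨g, hg⟩ := hC₂ hf (hgp.init.comp f.injective) (Nat.lt_succ_self _)
    exact ⟨g.trans f, (hq.comp (f.strictMono.comp g.strictMono)).superOrderTypeHomogeneous hg⟩

end Subsequences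

theorem exists_orderTypeHomogeneous_comp (d n : ℕ) :
    ∃ N, ∀ p : Fin N → Fin d → ℝ, GeneralPosition p →
      ∃ f : Fin n → Fin N, StrictMono f ∧ OrderTypeHomogeneous fun i => p (f i) := by
  obtain ⟨N, hN⟩ := exists_orderEmbedding_forall_color_eq Bool (d + 1) n
  refine ⟨N, fun p hp => ?_⟩
  obtain ⟨e, b, he⟩ := hN (signSeq p)
  refine ⟨e, e.strictMono, (hp.comp e.injective).orderTypeHomogeneous (b := b) fun S hS => ?_⟩
  rw [← signSeq_map, he S hS]

theorem exists_COTNum_succ_le_OTNum (d : ℕ) :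
    ∃ C : ℕ, ∀ {n s : ℕ}, C * s < n → COTNum d (s + 1) ≤ OTNum d n := by
  obtain ⟨C, hC⟩ := OrderTypeHomogeneous.exists_superOrderTypeHomogeneous d
  refine ⟨C, fun {n s} hn => Nat.sInf_le fun p hp => ?_⟩
  obtain ⟨f, hf, hOT⟩ := Nat.sInf_mem (exists_orderTypeHomogeneous_comp d n) p hp.generalPosition
  obtain ⟨g, hg⟩ := hC hOT (hp.comp hf.injective) hn
  exact ⟨f ∘ g, hf.comp g.strictMono, hg⟩

theorem COTNum_zero (d : ℕ) : COTNum d 0 = 0 := by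
  refine Nat.le_zero.mp (Nat.sInf_le fun p _ => ⟨id, strictMono_id, fun k _ _ => ?_⟩)
  exact ⟨1, one_ne_zero, fun f _ => (f 0).elim0⟩

/-- For every `d ≥ 2` there is a constant `c > 0` with
`OT_d(n) ≥ COT_d(⌈c·n⌉)` for all `n`. -/
theorem OT_ge_COT :
    ∀ d : ℕ, 2 ≤ d → ∃ c : ℝ, 0 < c ∧ ∀ n : ℕ, COTNum d ⌈c * (n : ℝ)⌉₊ ≤ OTNum d n := by
  intro d _
  obtain ⟨C, hC⟩ := exists_COTNum_succ_le_OTNum d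
  refine ⟨1 / (C + 1), by positivity, fun n => ?_⟩
  rcases h : ⌈1 / ((C : ℝ) + 1) * n⌉₊ with _ | s
  · exact (COTNum_zero d).trans_le (Nat.zero_le _)
  · have hs : (s : ℝ) < 1 / (C + 1) * n := Nat.lt_ceil.mp (h ▸ Nat.lt_succ_self s)
    rw [one_div_mul_eq_div, lt_div_iff₀ (by positivity)] at hs
    refine hC (lt_of_le_of_lt ?_ (show s * (C + 1) < n by exact_mod_cast hs))
    linarith
end
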